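/- Fix an integer k ≥ 4 and a constant C > 0. For every ε > 0 there is a constant C_ε such that for every integer N ≥ 1, the number of 6-tuples (n₁, …, n₆) of integers with N ≤ n_i ≤ 2N for all i, satisfying n₁² + n₂² + n₃² = n₄² + n₅² + n₆² and |n₁^k + n₂^k + n₃^k − n₄^k − n₅^k − n₆^k| ≤ C·N^{k-1}, is at most C_ε · N^{3+ε}. -/

import Mathlib

open MeasureTheory Real

noncomputable section


/-- Partial exponential sum over the integers of `S` in `[a, a + l)`. -/
def arcSum {Ω : Type} (e : ℤ → Ω → ℂ) (S : Finset ℤ) (a l : ℝ) (x : Ω) : ℂ :=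
  ∑ n ∈ S.filter (fun n : ℤ => a ≤ (n : ℝ) ∧ (n : ℝ) < a + l), e n x

lemma arcSum_add {Ω : Type} (e : ℤ → Ω → ℂ) (S : Finset ℤ) (a s t : ℝ) (hs : 0 ≤ s) (ht : 0 ≤ t)
    (x : Ω) : arcSum e S a (s + t) x = arcSum e S a s x + arcSum e S (a + s) t x := by
  unfold arcSum
  rw [← Finset.sum_union]
  · congr 1
    ext n
    simp only [Finset.mem_filter, Finset.mem_union]
    constructor
    · rintro ⟨h1, h2, h3⟩
      by_cases h : (n : ℝ) < a + s
      · left; exact ⟨h1, h2, h⟩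
      · right; exact ⟨h1, by linarith, by linarith⟩
    · rintro (⟨h1, h2, h3⟩ | ⟨h1, h2, h3⟩)
      · exact ⟨h1, h2, by linarith⟩
      · exact ⟨h1, by linarith, by linarith⟩
  · rw [Finset.disjoint_left]
    intro n h1 h2
    simp only [Finset.mem_filter] at h1 h2
    linarith [h1.2.2, h2.2.1]

lemma arcSum_split {Ω : Type} (e : ℤ → Ω → ℂ) (S : Finset ℤ) (a w : ℝ) (hw : 0 ≤ w) (m : ℕ)
    (x : Ω) : arcSum e S a (m * w) x = ∑ j ∈ Finset.range m, arcSum e S (a + j * w) w x := by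
  induction m with
  | zero =>
    simp only [Nat.cast_zero, zero_mul, Finset.range_zero, Finset.sum_empty]
    unfold arcSum
    apply Finset.sum_eq_zero
    intro n hn
    simp only [Finset.mem_filter] at hn
    linarith [hn.2.1, hn.2.2]
  | succ m ih =>
    rw [Finset.sum_range_succ, ← ih, ← arcSum_add _ _ _ _ _ (by positivity) hw]
    congr 1
    push_cast
    ring

/-- almost orthogonality -/
lemma almost_orth {Ω : Type} [Fintype Ω] (F : ℕ → Ω → ℂ) (G : Ω → ℝ) (hG : ∀ x, 0 ≤ G x) (m : ℕ)
    (h : ∀ i j, i < m → j < m → (i + 2 ≤ j ∨ j + 2 ≤ i) →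
      ∑ x, F i x * (starRingEnd ℂ) (F j x) * (G x : ℂ) = 0) :
    ∑ x, ‖∑ j ∈ Finset.range m, F j x‖ ^ 2 * G x ≤
      3 * ∑ j ∈ Finset.range m, ∑ x, ‖F j x‖ ^ 2 * G x := by
  set d : ℕ → ℝ := fun j => ∑ x, ‖F j x‖ ^ 2 * G x with hd
  have hd0 : ∀ j, 0 ≤ d j := fun j => Finset.sum_nonneg fun x _ => mul_nonneg (by positivity) (hG x)
  set c : ℕ → ℕ → ℝ := fun i j => (∑ x, F i x * (starRingEnd ℂ) (F j x) * (G x : ℂ)).re with hc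
  have h1 : ∑ x, ‖∑ j ∈ Finset.range m, F j x‖ ^ 2 * G x =
      ∑ i ∈ Finset.range m, ∑ j ∈ Finset.range m, c i j := by
    have : ∀ x, ‖∑ j ∈ Finset.range m, F j x‖ ^ 2 * G x =
        ∑ i ∈ Finset.range m, ∑ j ∈ Finset.range m,
          (F i x * (starRingEnd ℂ) (F j x) * (G x : ℂ)).re := by
      intro x
      have h2 : ((‖∑ j ∈ Finset.range m, F j x‖ ^ 2 * G x : ℝ) : ℂ) =
        ∑ i ∈ Finset.range m, ∑ j ∈ Finset.range m,
          (F i x * (starRingEnd ℂ) (F j x) * (G x : ℂ)) := by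
        push_cast
        rw [← Complex.mul_conj', map_sum, Finset.sum_mul_sum, Finset.sum_mul]
        apply Finset.sum_congr rfl
        intro i _
        rw [Finset.sum_mul]
      have h3 := congrArg Complex.re h2
      rw [Complex.ofReal_re] at h3
      rw [h3, Complex.re_sum]
      simp only [Complex.re_sum]
    simp_rw [this]
    rw [Finset.sum_comm]
    apply Finset.sum_congr rfl
    intro i _
    rw [Finset.sum_comm]
    apply Finset.sum_congr rfl
    intro j _
    simp only [hc, Complex.re_sum]
  have h2 : ∀ i j, c i j ≤ (d i + d j) / 2 := by
    intro i j
    simp only [hc, hd, Complex.re_sum]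
    rw [← Finset.sum_add_distrib, Finset.sum_div]
    apply Finset.sum_le_sum
    intro x _
    have : (F i x * (starRingEnd ℂ) (F j x) * (G x : ℂ)).re ≤ ‖F i x‖ * ‖F j x‖ * G x := by
      refine (Complex.re_le_norm _).trans ?_
      simp [abs_of_nonneg (hG x)]
    nlinarith [mul_nonneg (sq_nonneg (‖F i x‖ - ‖F j x‖)) (hG x)]
  have h3 : ∀ i ∈ Finset.range m, ∀ j ∈ Finset.range m,
      c i j ≤ if (i ≤ j + 1 ∧ j ≤ i + 1) then (d i + d j) / 2 else 0 := by
    intro i hi j hj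
    split_ifs with hij
    · exact h2 i j
    · have := h i j (Finset.mem_range.1 hi) (Finset.mem_range.1 hj) (by omega)
      simp only [hc, this]
      simp
  have h4 : ∀ i, ∑ j ∈ Finset.range m, (if (i ≤ j + 1 ∧ j ≤ i + 1) then d i / 2 else 0) ≤
      3 * d i / 2 := by
    intro i
    rw [← Finset.sum_filter, Finset.sum_const, nsmul_eq_mul]
    have : (Finset.filter (fun j => i ≤ j + 1 ∧ j ≤ i + 1) (Finset.range m)).card ≤ 3 := by
      calc _ ≤ (Finset.Icc (i - 1) (i + 1)).card := by
            apply Finset.card_le_card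
            intro j hj
            simp only [Finset.mem_filter, Finset.mem_Icc] at *
            omega
        _ ≤ 3 := by simp; omega
    have h5 : ((Finset.filter (fun j => i ≤ j + 1 ∧ j ≤ i + 1) (Finset.range m)).card : ℝ) ≤ 3 := by
      exact_mod_cast this
    nlinarith [hd0 i]
  rw [h1]
  calc _ ≤ ∑ i ∈ Finset.range m, ∑ j ∈ Finset.range m,
        (if (i ≤ j + 1 ∧ j ≤ i + 1) then (d i + d j) / 2 else 0) :=
        Finset.sum_le_sum fun i hi => Finset.sum_le_sum fun j hj => h3 i hi j hj
    _ = ∑ i ∈ Finset.range m, ∑ j ∈ Finset.range m,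
        (if (i ≤ j + 1 ∧ j ≤ i + 1) then d i / 2 else 0) + 
        ∑ i ∈ Finset.range m, ∑ j ∈ Finset.range m,
        (if (j ≤ i + 1 ∧ i ≤ j + 1) then d j / 2 else 0) := by
        rw [← Finset.sum_add_distrib]
        apply Finset.sum_congr rfl
        intro i _
        rw [← Finset.sum_add_distrib]
        apply Finset.sum_congr rfl
        intro j _
        by_cases hij : (i ≤ j + 1 ∧ j ≤ i + 1)
        · rw [if_pos hij, if_pos hij, if_pos hij.symm]; ring
        · rw [if_neg hij, if_neg hij, if_neg (fun h => hij h.symm)]; ring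
    _ ≤ ∑ i ∈ Finset.range m, 3 * d i / 2 + ∑ j ∈ Finset.range m, 3 * d j / 2 := by
        apply add_le_add
        · exact Finset.sum_le_sum fun i _ => h4 i
        · rw [Finset.sum_comm]
          exact Finset.sum_le_sum fun i _ => h4 i
    _ = 3 * ∑ j ∈ Finset.range m, d j := by
        rw [← Finset.sum_add_distrib, Finset.mul_sum]
        apply Finset.sum_congr rfl
        intro i _
        ring

/-- The broad/narrow pointwise inequality. -/
lemma broad_narrow (Q H : ℕ) (hQ : 1 ≤ Q) (u : ℕ → ℝ) (hu : ∀ j, 0 ≤ u j) :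
    (∑ j ∈ Finset.range Q, u j) ^ 6 ≤ (2 * H + 2 : ℝ) ^ 6 * ∑ j ∈ Finset.range Q, u j ^ 6 +
      (Q : ℝ) ^ 8 * ∑ i ∈ Finset.range Q, ∑ j ∈ Finset.range Q,
        (if (i + H + 1 ≤ j ∨ j + H + 1 ≤ i) then u i ^ 2 * u j ^ 4 else 0) := by
  obtain ⟨s, hs, hmax⟩ := Finset.exists_max_image (Finset.range Q) u ⟨0, Finset.mem_range.2 hQ⟩
  have hQ' : (1 : ℝ) ≤ Q := by exact_mod_cast hQ
  have hterm : ∀ i j, 0 ≤ (if (i + H + 1 ≤ j ∨ j + H + 1 ≤ i) then u i ^ 2 * u j ^ 4 else 0) := by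
    intro i j
    have := hu i
    have := hu j
    split_ifs <;> positivity
  have hsum0 : 0 ≤ ∑ j ∈ Finset.range Q, u j := Finset.sum_nonneg fun j _ => hu j
  have hus := hu s
  by_cases hb : ∃ i ∈ Finset.range Q, (i + H + 1 ≤ s ∨ s + H + 1 ≤ i) ∧ u s ≤ Q * u i
  · obtain ⟨i, hi, his, hle⟩ := hb
    have h1 : ∑ j ∈ Finset.range Q, u j ≤ Q * u s := by
      calc _ ≤ ∑ j ∈ Finset.range Q, u s := Finset.sum_le_sum hmax
        _ = Q * u s := by simp
    have h2 : u i ^ 2 * u s ^ 4 ≤ ∑ i ∈ Finset.range Q, ∑ j ∈ Finset.range Q,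
        (if (i + H + 1 ≤ j ∨ j + H + 1 ≤ i) then u i ^ 2 * u j ^ 4 else 0) := by
      calc u i ^ 2 * u s ^ 4 = (if (i + H + 1 ≤ s ∨ s + H + 1 ≤ i) then u i ^ 2 * u s ^ 4 else 0) := by
            rw [if_pos his]
        _ ≤ ∑ j ∈ Finset.range Q,
          (if (i + H + 1 ≤ j ∨ j + H + 1 ≤ i) then u i ^ 2 * u j ^ 4 else 0) :=
            Finset.single_le_sum (f := fun j => (if (i + H + 1 ≤ j ∨ j + H + 1 ≤ i) then u i ^ 2 * u j ^ 4 else 0)) (fun j _ => hterm i j) hs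
        _ ≤ _ := Finset.single_le_sum (f := fun i => ∑ j ∈ Finset.range Q,
          (if (i + H + 1 ≤ j ∨ j + H + 1 ≤ i) then u i ^ 2 * u j ^ 4 else 0))
            (fun i _ => Finset.sum_nonneg fun j _ => hterm i j) hi
    have h3 : (∑ j ∈ Finset.range Q, u j) ^ 6 ≤ (Q : ℝ) ^ 8 * (u i ^ 2 * u s ^ 4) := by
      calc _ ≤ (Q * u s) ^ 6 := by gcongr
        _ = (Q : ℝ) ^ 6 * u s ^ 4 * u s ^ 2 := by ring
        _ ≤ (Q : ℝ) ^ 6 * u s ^ 4 * (Q * u i) ^ 2 := by gcongr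
        _ = _ := by ring
    have h4 : 0 ≤ (2 * H + 2 : ℝ) ^ 6 * ∑ j ∈ Finset.range Q, u j ^ 6 := by
      apply mul_nonneg (by positivity)
      exact Finset.sum_nonneg fun j _ => by have := hu j; positivity
    have h5 := mul_le_mul_of_nonneg_left h2 (by positivity : (0 : ℝ) ≤ (Q : ℝ) ^ 8)
    linarith
  · push Not at hb
    have h1 : ∑ j ∈ Finset.range Q, u j ≤ (2 * H + 2) * u s := by
      rw [← Finset.sum_filter_add_sum_filter_not _ (fun i => i + H + 1 ≤ s ∨ s + H + 1 ≤ i)]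
      have ha : ∑ i ∈ (Finset.range Q).filter (fun i => i + H + 1 ≤ s ∨ s + H + 1 ≤ i), u i ≤ u s := by
        calc _ ≤ ∑ i ∈ (Finset.range Q).filter (fun i => i + H + 1 ≤ s ∨ s + H + 1 ≤ i), u s / Q := by
              apply Finset.sum_le_sum
              intro i hi
              rw [Finset.mem_filter] at hi
              rw [le_div_iff₀ (by positivity)]
              linarith [hb i hi.1 hi.2]
          _ ≤ ∑ i ∈ Finset.range Q, u s / Q :=
              Finset.sum_le_sum_of_subset_of_nonneg (Finset.filter_subset _ _) (fun _ _ _ => by positivity)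
          _ = u s := by
              simp only [Finset.sum_const, Finset.card_range, nsmul_eq_mul]
              field_simp
      have hb' : ∑ i ∈ (Finset.range Q).filter (fun i => ¬ (i + H + 1 ≤ s ∨ s + H + 1 ≤ i)), u i ≤
          (2 * H + 1) * u s := by
        calc _ ≤ ∑ i ∈ (Finset.range Q).filter (fun i => ¬ (i + H + 1 ≤ s ∨ s + H + 1 ≤ i)), u s := by
              apply Finset.sum_le_sum
              intro i hi
              rw [Finset.mem_filter] at hi
              exact hmax i hi.1
          _ ≤ (2 * H + 1) * u s := by
              rw [Finset.sum_const, nsmul_eq_mul]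
              apply mul_le_mul_of_nonneg_right _ hus
              have : ((Finset.range Q).filter (fun i => ¬ (i + H + 1 ≤ s ∨ s + H + 1 ≤ i))).card ≤ 2 * H + 1 := by
                calc _ ≤ (Finset.Icc (s - H) (s + H)).card := by
                      apply Finset.card_le_card
                      intro j hj
                      simp only [Finset.mem_filter, Finset.mem_Icc] at *
                      omega
                  _ ≤ _ := by simp; omega
              exact_mod_cast this
      linarith
    have h2 : u s ^ 6 ≤ ∑ j ∈ Finset.range Q, u j ^ 6 :=
      Finset.single_le_sum (f := fun j => u j ^ 6) (fun j _ => by have := hu j; positivity) hs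
    have h3 : 0 ≤ (Q : ℝ) ^ 8 * ∑ i ∈ Finset.range Q, ∑ j ∈ Finset.range Q,
        (if (i + H + 1 ≤ j ∨ j + H + 1 ≤ i) then u i ^ 2 * u j ^ 4 else 0) :=
      mul_nonneg (by positivity) (Finset.sum_nonneg fun i _ => Finset.sum_nonneg fun j _ => hterm i j)
    calc _ ≤ ((2 * H + 2) * u s) ^ 6 := by gcongr
      _ = (2 * H + 2 : ℝ) ^ 6 * u s ^ 6 := by ring
      _ ≤ (2 * H + 2 : ℝ) ^ 6 * ∑ j ∈ Finset.range Q, u j ^ 6 := by gcongr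
      _ ≤ _ := by linarith

lemma sum_zero_lin {Ω : Type} [Fintype Ω] (A : Finset ℤ) (φ : ℤ → Ω → ℂ) (W : Ω → ℂ)
    (h : ∀ n ∈ A, ∑ x, φ n x * W x = 0) : ∑ x, (∑ n ∈ A, φ n x) * W x = 0 := by
  simp_rw [Finset.sum_mul]
  rw [Finset.sum_comm]
  exact Finset.sum_eq_zero h

lemma sum_zero_lin2 {Ω : Type} [Fintype Ω] (A : Finset ℤ) (φ : ℤ → Ω → ℂ) (P W : Ω → ℂ)
    (h : ∀ n ∈ A, ∑ x, P x * φ n x * W x = 0) : ∑ x, P x * ((∑ n ∈ A, φ n x) * W x) = 0 := by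
  simp_rw [Finset.sum_mul, Finset.mul_sum, ← mul_assoc]
  rw [Finset.sum_comm]
  exact Finset.sum_eq_zero h

lemma sum_zero_lin3 {Ω : Type} [Fintype Ω] (A : Finset ℤ) (φ : ℤ → Ω → ℂ) (P : Ω → ℂ)
    (h : ∀ n ∈ A, ∑ x, P x * φ n x = 0) : ∑ x, P x * (∑ n ∈ A, φ n x) = 0 := by
  simp_rw [Finset.mul_sum]
  rw [Finset.sum_comm]
  exact Finset.sum_eq_zero h

/-- Transversality: vanishing of the separated six-fold correlations. -/
def Transv {Ω : Type} [Fintype Ω] (e : ℤ → Ω → ℂ) (S : Finset ℤ) (R C0 : ℝ) : Prop :=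
  ∀ (a l D : ℝ), R ≤ l → 0 < D → ∀ n1 ∈ S, ∀ n2 ∈ S, ∀ n3 ∈ S, ∀ n4 ∈ S, ∀ n5 ∈ S, ∀ n6 ∈ S,
    (a ≤ (n2 : ℝ) ∧ (n2 : ℝ) < a + l) → (a ≤ (n3 : ℝ) ∧ (n3 : ℝ) < a + l) →
    (a ≤ (n5 : ℝ) ∧ (n5 : ℝ) < a + l) → (a ≤ (n6 : ℝ) ∧ (n6 : ℝ) < a + l) →
    ((a + l + D ≤ (n1 : ℝ) ∧ a + l + D ≤ (n4 : ℝ)) ∨ ((n1 : ℝ) + D ≤ a ∧ (n4 : ℝ) + D ≤ a)) →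
    C0 * l ^ 2 < |(n1 : ℝ) - n4| * D →
    ∑ x, e n1 x * ((starRingEnd ℂ) (e n4 x) * (e n2 x * (e n3 x *
      ((starRingEnd ℂ) (e n5 x) * (starRingEnd ℂ) (e n6 x))))) = 0

lemma orth_arc {Ω : Type} [Fintype Ω] (e : ℤ → Ω → ℂ) (S : Finset ℤ) (R C0 : ℝ)
    (hT : Transv e S R C0) (a1 w a2 l D : ℝ) (i j m : ℕ) (hw : 0 < w) (hl : R ≤ l) (hD : 0 < D)
    (hi : i < m) (hj : j < m) (hij : i + 2 ≤ j ∨ j + 2 ≤ i)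
    (hsep : a2 + l + D ≤ a1 ∨ a1 + m * w + D ≤ a2) (hC : C0 * l ^ 2 ≤ w * D) :
    ∑ x, arcSum e S (a1 + i * w) w x * (starRingEnd ℂ) (arcSum e S (a1 + j * w) w x) *
      ((‖arcSum e S a2 l x‖ ^ 4 : ℝ) : ℂ) = 0 := by
  have h0 : ∀ x, arcSum e S (a1 + i * w) w x * (starRingEnd ℂ) (arcSum e S (a1 + j * w) w x) *
      ((‖arcSum e S a2 l x‖ ^ 4 : ℝ) : ℂ) =
      arcSum e S (a1 + i * w) w x * ((starRingEnd ℂ) (arcSum e S (a1 + j * w) w x) *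
        (arcSum e S a2 l x * (arcSum e S a2 l x * ((starRingEnd ℂ) (arcSum e S a2 l x) *
          (starRingEnd ℂ) (arcSum e S a2 l x))))) := by
    intro x
    have : ((‖arcSum e S a2 l x‖ ^ 4 : ℝ) : ℂ) =
      (arcSum e S a2 l x * (starRingEnd ℂ) (arcSum e S a2 l x)) ^ 2 := by
      rw [Complex.mul_conj']; push_cast; ring
    rw [this]; ring
  simp_rw [h0]
  simp only [arcSum, map_sum]
  have himR : (i : ℝ) + 1 ≤ m := by exact_mod_cast hi
  have hjmR : (j : ℝ) + 1 ≤ m := by exact_mod_cast hj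
  apply sum_zero_lin
  intro n1 hn1
  apply sum_zero_lin2
  intro n4 hn4
  apply sum_zero_lin2
  intro n2 hn2
  apply sum_zero_lin2
  intro n3 hn3
  apply sum_zero_lin2
  intro n5 hn5
  apply sum_zero_lin3
  intro n6 hn6
  simp only [Finset.mem_filter] at hn1 hn2 hn3 hn4 hn5 hn6
  have hiw : (0 : ℝ) ≤ i * w := by positivity
  have hjw : (0 : ℝ) ≤ j * w := by positivity
  have himw : (i + 1 : ℝ) * w ≤ m * w := by gcongr
  have hjmw : (j + 1 : ℝ) * w ≤ m * w := by gcongr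
  have key := hT a2 l D hl hD n1 hn1.1 n2 hn2.1 n3 hn3.1 n4 hn4.1 n5 hn5.1 n6 hn6.1
    hn2.2 hn3.2 hn5.2 hn6.2 (by
      rcases hsep with h | h
      · left; exact ⟨by linarith [hn1.2.1], by linarith [hn4.2.1]⟩
      · right; exact ⟨by linarith [hn1.2.2], by linarith [hn4.2.2]⟩) (by
      have : w < |(n1 : ℝ) - n4| := by
        rw [lt_abs]
        rcases hij with h | h
        · right
          have : (i + 2 : ℝ) * w ≤ j * w := by
            gcongr
            exact_mod_cast h
          linarith [hn1.2.2, hn4.2.1]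
        · left
          have : (j + 2 : ℝ) * w ≤ i * w := by
            gcongr
            exact_mod_cast h
          linarith [hn4.2.2, hn1.2.1]
      nlinarith)
  rw [← key]
  apply Finset.sum_congr rfl
  intro x _
  ring

/-- bilinear mean value -/
def bilM {Ω : Type} [Fintype Ω] (e : ℤ → Ω → ℂ) (S : Finset ℤ) (a1 l1 a2 l2 : ℝ) : ℝ :=
  ∑ x, ‖arcSum e S a1 l1 x‖ ^ 2 * ‖arcSum e S a2 l2 x‖ ^ 4

/-- sixth moment -/
def sixV {Ω : Type} [Fintype Ω] (e : ℤ → Ω → ℂ) (S : Finset ℤ) (a l : ℝ) : ℝ :=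
  ∑ x, ‖arcSum e S a l x‖ ^ 6

lemma bilM_nonneg {Ω : Type} [Fintype Ω] (e : ℤ → Ω → ℂ) (S : Finset ℤ) (a1 l1 a2 l2 : ℝ) :
    0 ≤ bilM e S a1 l1 a2 l2 := Finset.sum_nonneg fun x _ => by positivity

lemma bilM_sq_le {Ω : Type} [Fintype Ω] (e : ℤ → Ω → ℂ) (S : Finset ℤ) (a1 l1 a2 l2 : ℝ) :
    bilM e S a1 l1 a2 l2 ^ 2 ≤ bilM e S a2 l2 a1 l1 * sixV e S a2 l2 := by
  have := Finset.sum_mul_sq_le_sq_mul_sq Finset.univ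
    (fun x => ‖arcSum e S a1 l1 x‖ ^ 2 * ‖arcSum e S a2 l2 x‖) (fun x => ‖arcSum e S a2 l2 x‖ ^ 3)
  have h1 : bilM e S a1 l1 a2 l2 = ∑ x, ‖arcSum e S a1 l1 x‖ ^ 2 * ‖arcSum e S a2 l2 x‖ *
      ‖arcSum e S a2 l2 x‖ ^ 3 := Finset.sum_congr rfl fun x _ => by ring
  have h2 : bilM e S a2 l2 a1 l1 = ∑ x, (‖arcSum e S a1 l1 x‖ ^ 2 * ‖arcSum e S a2 l2 x‖) ^ 2 :=
    Finset.sum_congr rfl fun x _ => by ring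
  have h3 : sixV e S a2 l2 = ∑ x, (‖arcSum e S a2 l2 x‖ ^ 3) ^ 2 :=
    Finset.sum_congr rfl fun x _ => by ring
  rw [h1, h2, h3]
  exact this

lemma xyy_le (x y : ℝ) (hx : 0 ≤ x) (hy : 0 ≤ y) : x * y ^ 2 ≤ x ^ 3 + y ^ 3 := by
  rcases le_total x y with h | h
  · have : x * y ^ 2 ≤ y * y ^ 2 := by gcongr
    have : 0 ≤ x ^ 3 := by positivity
    nlinarith
  · have : x * y ^ 2 ≤ x * x ^ 2 := by gcongr
    have : 0 ≤ y ^ 3 := by positivity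
    nlinarith

lemma bilM_le {Ω : Type} [Fintype Ω] (e : ℤ → Ω → ℂ) (S : Finset ℤ) (a1 l1 a2 l2 B : ℝ)
    (h1 : 0 < l1) (h2 : 0 < l2) (hV1 : sixV e S a1 l1 ≤ B * l1 ^ 3)
    (hV2 : sixV e S a2 l2 ≤ B * l2 ^ 3) :
    bilM e S a1 l1 a2 l2 ≤ 2 * B * l1 * l2 ^ 2 := by
  have hp : ∀ x, ‖arcSum e S a1 l1 x‖ ^ 2 * ‖arcSum e S a2 l2 x‖ ^ 4 ≤
      l1 * l2 ^ 2 * (‖arcSum e S a1 l1 x‖ ^ 6 / l1 ^ 3 + ‖arcSum e S a2 l2 x‖ ^ 6 / l2 ^ 3) := by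
    intro x
    have := xyy_le (‖arcSum e S a1 l1 x‖ ^ 2 / l1) (‖arcSum e S a2 l2 x‖ ^ 2 / l2)
      (by positivity) (by positivity)
    calc _ = l1 * l2 ^ 2 * (‖arcSum e S a1 l1 x‖ ^ 2 / l1 * (‖arcSum e S a2 l2 x‖ ^ 2 / l2) ^ 2) := by
          field_simp
      _ ≤ _ := by
          apply mul_le_mul_of_nonneg_left _ (by positivity)
          refine this.trans (le_of_eq ?_)
          rw [div_pow, div_pow]
          ring
  calc bilM e S a1 l1 a2 l2 ≤ ∑ x, l1 * l2 ^ 2 *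
        (‖arcSum e S a1 l1 x‖ ^ 6 / l1 ^ 3 + ‖arcSum e S a2 l2 x‖ ^ 6 / l2 ^ 3) :=
        Finset.sum_le_sum fun x _ => hp x
    _ = l1 * l2 ^ 2 * (sixV e S a1 l1 / l1 ^ 3 + sixV e S a2 l2 / l2 ^ 3) := by
        rw [← Finset.mul_sum, Finset.sum_add_distrib, ← Finset.sum_div, ← Finset.sum_div]
        rfl
    _ ≤ l1 * l2 ^ 2 * (B + B) := by
        gcongr
        · rw [div_le_iff₀ (by positivity)]; exact hV1
        · rw [div_le_iff₀ (by positivity)]; exact hV2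
    _ = _ := by ring

lemma bilM_split {Ω : Type} [Fintype Ω] (e : ℤ → Ω → ℂ) (S : Finset ℤ) (R C0 : ℝ)
    (hT : Transv e S R C0) (a1 w a2 l D : ℝ) (m : ℕ) (hw : 0 < w) (hl : R ≤ l) (hD : 0 < D)
    (hsep : a2 + l + D ≤ a1 ∨ a1 + m * w + D ≤ a2) (hC : C0 * l ^ 2 ≤ w * D) :
    bilM e S a1 (m * w) a2 l ≤ 3 * ∑ j ∈ Finset.range m, bilM e S (a1 + j * w) w a2 l := by
  unfold bilM
  have := almost_orth (fun j x => arcSum e S (a1 + j * w) w x) (fun x => ‖arcSum e S a2 l x‖ ^ 4)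
    (fun x => by positivity) m (fun i j hi hj hij =>
      orth_arc e S R C0 hT a1 w a2 l D i j m hw hl hD hi hj hij hsep hC)
  simp_rw [arcSum_split e S a1 w hw.le m]
  exact this

lemma bilinear_iter {Ω : Type} [Fintype Ω] (e : ℤ → Ω → ℂ) (S : Finset ℤ) (R C0 : ℝ) (hR : 0 < R)
    (hT : Transv e S R C0) (κ D L L1 A η : ℝ) (hκ : 0 < κ) (hD : 0 < D) (hκD : C0 ≤ κ * D)
    (hL : 1 ≤ 2 * κ * L) (hL0 : 0 < L) (hL1 : κ * L1 ≤ 1 / 4) (hL1L : L1 ≤ L)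
    (hA : 0 ≤ A) (hη : 0 < η)
    (hV : ∀ a l, R ≤ l → l ≤ L1 → sixV e S a l ≤ A * l ^ η * l ^ 3) (J : ℕ) :
    ∀ a1 l1 a2 l2 : ℝ, R ≤ l1 → l1 ≤ L1 → l2 ≤ L1 → 0 < l2 → κ * R ≤ (κ * l2) ^ (2 ^ J) →
      κ * l2 ^ 2 ≤ l1 → (a2 + l2 + D ≤ a1 ∨ a1 + l1 + D ≤ a2) →
      bilM e S a1 l1 a2 l2 ≤ 9 * A * L ^ η * l1 * l2 ^ 2 * ((2 * κ * l2) ^ (η / 2)) ^ J := by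
  induction J with
  | zero =>
    intro a1 l1 a2 l2 h1 h1' h2' h2 hs _ hsep
    have hl1 : 0 < l1 := by linarith
    have hRl2 : R ≤ l2 := by
      simp only [pow_zero, pow_one] at hs
      exact le_of_mul_le_mul_left hs hκ
    have hb : ∀ l, 0 < l → l ≤ L1 → A * l ^ η * l ^ 3 ≤ A * L ^ η * l ^ 3 := by
      intro l hl hl'
      have : l ^ η ≤ L ^ η := Real.rpow_le_rpow hl.le (by linarith) hη.le
      gcongr
    have := bilM_le e S a1 l1 a2 l2 (A * L ^ η) hl1 h2
      ((hV a1 l1 h1 h1').trans (hb l1 hl1 h1')) ((hV a2 l2 hRl2 h2').trans (hb l2 h2 h2'))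
    rw [pow_zero, mul_one]
    have h0 : 0 ≤ A * L ^ η * l1 * l2 ^ 2 := by positivity
    linarith
  | succ J ih =>
    intro a1 l1 a2 l2 h1 h1' h2' h2 hs hk hsep
    have hl1 : 0 < l1 := by linarith
    have hκl2 : κ * l2 ≤ 1 / 4 := le_trans (by gcongr) hL1
    have hRl2 : R ≤ l2 := by
      have : (κ * l2) ^ (2 ^ (J + 1)) ≤ κ * l2 := by
        apply pow_le_of_le_one (by positivity) (by linarith)
        positivity
      exact le_of_mul_le_mul_left (hs.trans this) hκ
    have hk0 : 0 < κ * l2 ^ 2 := by positivity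
    set q := l1 / (κ * l2 ^ 2) with hq
    have hq1 : 1 ≤ q := by rw [hq, le_div_iff₀ hk0]; linarith
    set m := ⌊q⌋₊ with hm
    have hm1 : 1 ≤ m := by rw [hm]; exact Nat.le_floor (by simpa using hq1)
    have hm1R : (1 : ℝ) ≤ m := by exact_mod_cast hm1
    have hmq : (m : ℝ) ≤ q := Nat.floor_le (by linarith)
    have hqm : q < m + 1 := Nat.lt_floor_add_one q
    set w := l1 / m with hw
    have hmw : m * w = l1 := by rw [hw]; field_simp
    have hw0 : 0 < w := by positivity
    have hql : q * (κ * l2 ^ 2) = l1 := by rw [hq]; field_simp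
    have hw1 : κ * l2 ^ 2 ≤ w := by
      rw [hw, le_div_iff₀ (by positivity), ← hql]
      nlinarith
    have hw2 : w ≤ 2 * κ * l2 ^ 2 := by
      rw [hw, div_le_iff₀ (by positivity), ← hql]
      nlinarith
    have hwl2 : w ≤ l2 / 2 := by nlinarith
    have hC : C0 * l2 ^ 2 ≤ w * D := by
      calc C0 * l2 ^ 2 ≤ (κ * D) * l2 ^ 2 := by gcongr
        _ = (κ * l2 ^ 2) * D := by ring
        _ ≤ w * D := by gcongr
    set t := (2 * κ * l2) ^ (η / 2) with ht
    have ht0 : 0 < t := by positivity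
    have hsplit := bilM_split e S R C0 hT a1 w a2 l2 D m hw0 hRl2 hD (by rw [hmw]; exact hsep) hC
    rw [hmw] at hsplit
    have hVl : sixV e S a2 l2 ≤ A * (t ^ 2 * L ^ η) * l2 ^ 3 := by
      refine (hV a2 l2 hRl2 h2').trans ?_
      have : l2 ^ η ≤ t ^ 2 * L ^ η := by
        have h3 : t ^ 2 = (2 * κ * l2) ^ η := by
          rw [ht, ← Real.rpow_natCast, ← Real.rpow_mul (by positivity)]
          congr 1
          push_cast
          ring
        rw [h3, ← Real.mul_rpow (by positivity) hL0.le]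
        apply Real.rpow_le_rpow h2.le _ hη.le
        nlinarith
      gcongr
    have hMj : ∀ j ∈ Finset.range m, bilM e S (a1 + j * w) w a2 l2 ≤
        3 * A * L ^ η * l2 ^ 2 * w * t ^ (J + 1) := by
      intro j hj
      have hj' : ((j : ℝ) + 1) ≤ m := by exact_mod_cast Finset.mem_range.1 hj
      have hj2 : ((j : ℝ) + 1) * w ≤ m * w := by gcongr
      have hj3 : (0 : ℝ) ≤ j * w := by positivity
      have hih := ih a2 l2 (a1 + j * w) w hRl2 h2' (by linarith) hw0 (by
        refine hs.trans ?_
        rw [pow_succ 2 J, mul_comm (2 ^ J) 2, pow_mul]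
        apply pow_le_pow_left₀ (by positivity)
        calc (κ * l2) ^ 2 = κ * (κ * l2 ^ 2) := by ring
          _ ≤ κ * w := by gcongr) (by
        calc κ * w ^ 2 = κ * w * w := by ring
          _ ≤ κ * l2 * l2 := by gcongr <;> linarith
          _ ≤ 1 * l2 := by gcongr; linarith
          _ = l2 := one_mul _) (by
        rcases hsep with h | h
        · right; linarith
        · left; linarith)
      have htw : ((2 * κ * w) ^ (η / 2)) ≤ t ^ 2 := by
        have h3 : t ^ 2 = ((2 * κ * l2) ^ 2) ^ (η / 2) := by
          rw [ht, ← Real.rpow_natCast, ← Real.rpow_natCast, ← Real.rpow_mul (by positivity), ← Real.rpow_mul (by positivity)]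
          congr 1
          ring
        rw [h3]
        apply Real.rpow_le_rpow (by positivity) _ (by positivity)
        nlinarith
      have hih2 : bilM e S a2 l2 (a1 + j * w) w ≤ 9 * A * L ^ η * l2 * w ^ 2 * (t ^ 2) ^ J := by
        refine hih.trans ?_
        gcongr
      refine le_of_abs_le (abs_le_of_sq_le_sq ?_ (by positivity))
      calc _ ≤ _ := bilM_sq_le e S (a1 + j * w) w a2 l2
        _ ≤ (9 * A * L ^ η * l2 * w ^ 2 * (t ^ 2) ^ J) * (A * (t ^ 2 * L ^ η) * l2 ^ 3) := by
            apply mul_le_mul hih2 hVl (Finset.sum_nonneg fun x _ => by positivity) (by positivity)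
        _ = _ := by ring
    calc _ ≤ _ := hsplit
      _ ≤ 3 * ∑ j ∈ Finset.range m, 3 * A * L ^ η * l2 ^ 2 * w * t ^ (J + 1) := by
          gcongr with j hj
          exact hMj j hj
      _ = 9 * A * L ^ η * (m * w) * l2 ^ 2 * t ^ (J + 1) := by
          rw [Finset.sum_const, Finset.card_range, nsmul_eq_mul]; ring
      _ = _ := by rw [hmw]

lemma core_step {Ω : Type} [Fintype Ω] (e : ℤ → Ω → ℂ) (S : Finset ℤ) (R : ℝ) (hR : 0 < R)
    (C0 H Q J : ℕ) (hC0 : 1 ≤ C0) (hH : H = 4 * C0) (hQ : Q = 2 * (2 * H + 2) ^ 3) (η : ℝ)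
    (hη : 0 < η) (hJ : 9 * (Q : ℝ) ^ 7 * ((1 / 2 : ℝ) ^ (η / 2)) ^ J ≤ 3 / 4)
    (hT : Transv e S R C0) (A L : ℝ) (hA : 0 ≤ A) (hL : Q * 4 ^ (2 ^ J) * R ≤ L)
    (hV : ∀ a l, R ≤ l → l ≤ L / Q → sixV e S a l ≤ A * l ^ η * l ^ 3) (a : ℝ) :
    sixV e S a L ≤ A * L ^ η * L ^ 3 := by
  have hQ2 : 2 ≤ Q := by rw [hQ]; nlinarith [Nat.one_le_pow 3 (2 * H + 2) (by omega)]
  have hQR : (2 : ℝ) ≤ Q := by exact_mod_cast hQ2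
  have hQ0 : (0 : ℝ) < Q := by linarith
  have h4 : (1 : ℝ) ≤ 4 ^ (2 ^ J) := one_le_pow₀ (by norm_num)
  have hL0 : 0 < L := lt_of_lt_of_le (by positivity) hL
  set w := L / Q with hw
  have hw0 : 0 < w := by positivity
  have hQw : Q * w = L := by rw [hw]; field_simp
  have hRw : R ≤ w := by
    rw [hw, le_div_iff₀ hQ0]
    nlinarith [mul_le_mul_of_nonneg_left h4 (by positivity : (0 : ℝ) ≤ Q * R)]
  have hwL : w ≤ L := by rw [← hQw]; nlinarith
  set κ : ℝ := Q / (4 * L) with hκ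
  have hκ0 : 0 < κ := by positivity
  have hκw : κ * w = 1 / 4 := by rw [hκ, hw]; field_simp
  set D : ℝ := H * w with hD
  have hHR : (H : ℝ) = 4 * C0 := by rw [hH]; push_cast; ring
  have hC0R : (1 : ℝ) ≤ C0 := by exact_mod_cast hC0
  have hD0 : 0 < D := by rw [hD, hHR]; positivity
  have hκD : (C0 : ℝ) ≤ κ * D := by
    rw [hD, hHR]
    have : κ * (4 * C0 * w) = C0 * (4 * (κ * w)) := by ring
    rw [this, hκw]; linarith
  have h2κL : 1 ≤ 2 * κ * L := by
    rw [hκ]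
    have : 2 * ((Q : ℝ) / (4 * L)) * L = Q / 2 := by field_simp; norm_num
    rw [this]; linarith
  have hwη : w ^ η ≤ L ^ η := Real.rpow_le_rpow hw0.le hwL hη.le
  have hbil := bilinear_iter e S R C0 hR hT κ D L w A η hκ0 hD0 hκD h2κL hL0 hκw.le hwL hA hη
    hV J
  have hfar : ∀ i j : ℕ, (i + H + 1 ≤ j ∨ j + H + 1 ≤ i) →
      bilM e S (a + i * w) w (a + j * w) w ≤
        9 * A * L ^ η * w ^ 3 * ((1 / 2 : ℝ) ^ (η / 2)) ^ J := by
    intro i j hij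
    have := hbil (a + i * w) w (a + j * w) w hRw le_rfl le_rfl hw0 (by
      rw [hκw, one_div, inv_pow, hκ, le_inv_comm₀ (by positivity) (by positivity), ← one_div,
        le_div_iff₀ (by positivity)]
      have : 4 ^ 2 ^ J * (Q / (4 * L) * R) = (Q * 4 ^ (2 ^ J) * R) / (4 * L) := by ring
      rw [this, div_le_iff₀ (by positivity)]
      linarith) (by nlinarith) (by
        rcases hij with h | h
        · right
          have h' : ((i : ℝ) + H + 1) ≤ j := by exact_mod_cast h
          have := mul_le_mul_of_nonneg_right h' hw0.le
          rw [hD]; linarith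
        · left
          have h' : ((j : ℝ) + H + 1) ≤ i := by exact_mod_cast h
          have := mul_le_mul_of_nonneg_right h' hw0.le
          rw [hD]; linarith)
    refine this.trans (le_of_eq ?_)
    have : 2 * κ * w = 1 / 2 := by rw [mul_assoc, hκw]; norm_num
    rw [this]; ring
  have hpt : ∀ x, ‖arcSum e S a L x‖ ^ 6 ≤
      (2 * H + 2 : ℝ) ^ 6 * ∑ j ∈ Finset.range Q, ‖arcSum e S (a + j * w) w x‖ ^ 6 +
      (Q : ℝ) ^ 8 * ∑ i ∈ Finset.range Q, ∑ j ∈ Finset.range Q,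
        (if (i + H + 1 ≤ j ∨ j + H + 1 ≤ i) then
          ‖arcSum e S (a + i * w) w x‖ ^ 2 * ‖arcSum e S (a + j * w) w x‖ ^ 4 else 0) := by
    intro x
    refine le_trans ?_ (broad_narrow Q H (by omega) (fun j => ‖arcSum e S (a + j * w) w x‖)
      (fun j => norm_nonneg _))
    rw [← hQw, arcSum_split e S a w hw0.le]
    gcongr
    exact norm_sum_le _ _
  have hQ6 : (Q : ℝ) ^ 2 = 4 * (2 * H + 2 : ℝ) ^ 6 := by rw [hQ]; push_cast; ring
  have hη0 : 0 ≤ L ^ η := by positivity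
  calc sixV e S a L ≤ ∑ x, ((2 * H + 2 : ℝ) ^ 6 * ∑ j ∈ Finset.range Q, ‖arcSum e S (a + j * w) w x‖ ^ 6 +
      (Q : ℝ) ^ 8 * ∑ i ∈ Finset.range Q, ∑ j ∈ Finset.range Q,
        (if (i + H + 1 ≤ j ∨ j + H + 1 ≤ i) then
          ‖arcSum e S (a + i * w) w x‖ ^ 2 * ‖arcSum e S (a + j * w) w x‖ ^ 4 else 0)) :=
        Finset.sum_le_sum fun x _ => hpt x
    _ = (2 * H + 2 : ℝ) ^ 6 * ∑ j ∈ Finset.range Q, sixV e S (a + j * w) w +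
      (Q : ℝ) ^ 8 * ∑ i ∈ Finset.range Q, ∑ j ∈ Finset.range Q,
        (if (i + H + 1 ≤ j ∨ j + H + 1 ≤ i) then bilM e S (a + i * w) w (a + j * w) w else 0) := by
        rw [Finset.sum_add_distrib, ← Finset.mul_sum, ← Finset.mul_sum]
        congr 2
        · rw [Finset.sum_comm]; rfl
        · rw [Finset.sum_comm]
          apply Finset.sum_congr rfl
          intro i _
          rw [Finset.sum_comm]
          apply Finset.sum_congr rfl
          intro j _
          split_ifs
          · rfl
          · simp
    _ ≤ (2 * H + 2 : ℝ) ^ 6 * ∑ j ∈ Finset.range Q, (A * L ^ η * w ^ 3) +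
      (Q : ℝ) ^ 8 * ∑ i ∈ Finset.range Q, ∑ j ∈ Finset.range Q,
        (9 * A * L ^ η * w ^ 3 * ((1 / 2 : ℝ) ^ (η / 2)) ^ J) := by
        gcongr with j hj i hi j hj
        · refine (hV (a + j * w) w hRw le_rfl).trans ?_
          gcongr
        · split_ifs with h
          · exact hfar i j h
          · positivity
    _ = (A * L ^ η * (Q * w) ^ 3) * ((2 * H + 2 : ℝ) ^ 6 / Q ^ 2 +
        9 * (Q : ℝ) ^ 7 * ((1 / 2 : ℝ) ^ (η / 2)) ^ J) := by
        simp only [Finset.sum_const, Finset.card_range, nsmul_eq_mul]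
        field_simp
    _ ≤ (A * L ^ η * (Q * w) ^ 3) * (1 / 4 + 3 / 4) := by
        refine mul_le_mul_of_nonneg_left (add_le_add ?_ hJ) (by positivity)
        rw [hQ6, div_le_iff₀ (by positivity)]
        linarith
    _ = _ := by rw [hQw]; ring

theorem core_bound (C0 : ℕ) (hC0 : 1 ≤ C0) (η : ℝ) (hη : 0 < η) : ∃ T : ℝ, 1 ≤ T ∧
    ∀ (Ω : Type) [Fintype Ω] (e : ℤ → Ω → ℂ) (S : Finset ℤ) (R : ℝ), 0 < R →
      Transv e S R C0 → ∀ A : ℝ, 0 ≤ A →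
      (∀ a l, R ≤ l → l ≤ T * R → sixV e S a l ≤ A * l ^ η * l ^ 3) →
      ∀ a L, R ≤ L → sixV e S a L ≤ A * L ^ η * L ^ 3 := by
  obtain ⟨H, hH⟩ : ∃ H, H = 4 * C0 := ⟨_, rfl⟩
  obtain ⟨Q, hQ⟩ : ∃ Q, Q = 2 * (2 * H + 2) ^ 3 := ⟨_, rfl⟩
  have hQ2 : 2 ≤ Q := by rw [hQ]; nlinarith [Nat.one_le_pow 3 (2 * H + 2) (by omega)]
  have hQR : (2 : ℝ) ≤ Q := by exact_mod_cast hQ2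
  obtain ⟨J, hJ⟩ : ∃ J : ℕ, 9 * (Q : ℝ) ^ 7 * ((1 / 2 : ℝ) ^ (η / 2)) ^ J ≤ 3 / 4 := by
    obtain ⟨J, hJ⟩ := exists_pow_lt_of_lt_one (show (0 : ℝ) < 3 / 4 / (9 * (Q : ℝ) ^ 7) by positivity)
      (Real.rpow_lt_one (by norm_num : (0 : ℝ) ≤ 1 / 2) (by norm_num) (by positivity : 0 < η / 2))
    refine ⟨J, ?_⟩
    rw [lt_div_iff₀ (by positivity)] at hJ
    linarith
  have h4 : (1 : ℝ) ≤ 4 ^ (2 ^ J) := one_le_pow₀ (by norm_num)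
  refine ⟨Q * 4 ^ (2 ^ J), by nlinarith, ?_⟩
  intro Ω _ e S R hR hT A hA hbase
  have key : ∀ i : ℕ, ∀ a l, R ≤ l → l ≤ Q * 4 ^ (2 ^ J) * R * Q ^ i →
      sixV e S a l ≤ A * l ^ η * l ^ 3 := by
    intro i
    induction i with
    | zero =>
      intro a l h1 h2
      exact hbase a l h1 (by simpa using h2)
    | succ i ih =>
      intro a l h1 h2
      by_cases h : l ≤ Q * 4 ^ (2 ^ J) * R
      · exact hbase a l h1 h
      · push Not at h
        refine core_step e S R hR C0 H Q J hC0 hH hQ η hη hJ hT A l hA h.le ?_ a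
        intro a' l' h1' h2'
        apply ih a' l' h1'
        refine h2'.trans ?_
        rw [div_le_iff₀ (by positivity)]
        refine h2.trans (le_of_eq ?_)
        ring
  intro a L hL
  obtain ⟨i, hi⟩ := pow_unbounded_of_one_lt (L / (Q * 4 ^ (2 ^ J) * R)) (by linarith : (1 : ℝ) < Q)
  apply key i a L hL
  rw [div_lt_iff₀ (by positivity)] at hi
  linarith

lemma divisor_local (r : ℝ) (hr : 1 < r) (m : ℕ) : (m : ℝ) + 1 ≤ (1 + 1 / (r - 1)) * r ^ m := by
  have h1 : 1 + (m : ℝ) * (r - 1) ≤ r ^ m := by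
    have := one_add_mul_le_pow (a := r - 1) (by linarith) m
    simpa using this
  have h2 : 0 < r - 1 := by linarith
  calc (m : ℝ) + 1 ≤ (1 + 1 / (r - 1)) * (1 + (m : ℝ) * (r - 1)) := by
        have : (1 + 1 / (r - 1)) * (1 + (m : ℝ) * (r - 1)) =
          m + 1 + ((m : ℝ) * (r - 1) + 1 / (r - 1)) := by field_simp; ring
        rw [this]
        have : 0 ≤ (m : ℝ) * (r - 1) + 1 / (r - 1) := by positivity
        linarith
    _ ≤ _ := by gcongr

lemma divisor_bound (ε : ℝ) (hε : 0 < ε) : ∃ C : ℝ, 1 ≤ C ∧ ∀ n : ℕ, n ≠ 0 →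
    (n.divisors.card : ℝ) ≤ C * (n : ℝ) ^ ε := by
  set r : ℝ := 2 ^ ε with hr
  have hr1 : 1 < r := Real.one_lt_rpow (by norm_num) hε
  set K : ℝ := 1 + 1 / (r - 1) with hK
  have hK1 : 1 ≤ K := by
    have : 0 ≤ 1 / (r - 1) := by
      have : 0 < r - 1 := by linarith
      positivity
    linarith
  set P : ℕ := ⌈(2 : ℝ) ^ (1 / ε)⌉₊ with hP
  refine ⟨K ^ P, one_le_pow₀ hK1, ?_⟩
  intro n hn
  rw [Nat.card_divisors hn]
  have hn' : (n : ℝ) ^ ε = ∏ p ∈ n.primeFactors, ((p : ℝ) ^ ε) ^ (n.factorization p) := by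
    conv_lhs => rw [← Nat.prod_factorization_pow_eq_self hn]
    rw [Finsupp.prod, Nat.support_factorization]
    push_cast
    rw [← Real.finsetProd_rpow _ _ (fun i _ => by positivity)]
    apply Finset.prod_congr rfl
    intro p _
    rw [← Real.rpow_natCast, ← Real.rpow_mul (by positivity), ← Real.rpow_natCast, ← Real.rpow_mul (by positivity), mul_comm]
  rw [hn']
  push_cast
  calc ∏ p ∈ n.primeFactors, ((n.factorization p : ℝ) + 1) ≤
      ∏ p ∈ n.primeFactors, ((if p < P then K else 1) * ((p : ℝ) ^ ε) ^ (n.factorization p)) := by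
        apply Finset.prod_le_prod
        · intro p _; positivity
        · intro p hp
          have hp2 : 2 ≤ p := (Nat.prime_of_mem_primeFactors hp).two_le
          have hp2R : (2 : ℝ) ≤ p := by exact_mod_cast hp2
          split_ifs with h
          · refine (divisor_local r hr1 _).trans ?_
            rw [hr]
            gcongr
          · rw [one_mul]
            have h2 : (2 : ℝ) ≤ (p : ℝ) ^ ε := by
              have h3 : (2 : ℝ) ^ (1 / ε) ≤ p := by
                refine (Nat.le_ceil _).trans ?_
                exact_mod_cast not_lt.1 h
              calc (2 : ℝ) = ((2 : ℝ) ^ (1 / ε)) ^ ε := by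
                    rw [← Real.rpow_mul (by norm_num), one_div_mul_cancel hε.ne', Real.rpow_one]
                _ ≤ _ := Real.rpow_le_rpow (by positivity) h3 hε.le
            calc (n.factorization p : ℝ) + 1 ≤ 2 ^ (n.factorization p) := by
                  exact_mod_cast Nat.lt_two_pow_self
              _ ≤ _ := by gcongr
    _ = (∏ p ∈ n.primeFactors, (if p < P then K else 1)) *
        ∏ p ∈ n.primeFactors, ((p : ℝ) ^ ε) ^ (n.factorization p) := Finset.prod_mul_distrib
    _ ≤ _ := by
        apply mul_le_mul_of_nonneg_right _ (Finset.prod_nonneg fun p _ => by positivity)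
        rw [← Finset.prod_filter, Finset.prod_const]
        apply pow_le_pow_right₀ hK1
        calc _ ≤ (Finset.range P).card := by
              apply Finset.card_le_card
              intro p hp
              simp only [Finset.mem_filter, Finset.mem_range] at *
              exact hp.2
          _ = P := Finset.card_range P

/-- Shifted coincidences are dominated by exact coincidences. -/
lemma shift_card_le {α G : Type} [AddCommGroup G] [DecidableEq G] (T : Finset α) (F : α → G)
    (h : G) : ((T ×ˢ T).filter (fun p => F p.1 - F p.2 = h)).card ≤
      ((T ×ˢ T).filter (fun p => F p.1 = F p.2)).card := by
  classical
  set r : G → ℕ := fun v => (T.filter (fun x => F x = v)).card with hr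
  have key : ∀ g : G, ((T ×ˢ T).filter (fun p => F p.1 - F p.2 = g)).card =
      ∑ v ∈ T.image F, r (v + g) * r v := by
    intro g
    rw [Finset.card_eq_sum_card_fiberwise (f := fun p => F p.2) (t := T.image F)]
    · apply Finset.sum_congr rfl
      intro v _
      rw [hr, ← Finset.card_product]
      congr 1
      ext ⟨x, y⟩
      simp only [Finset.mem_filter, Finset.mem_product]
      constructor
      · rintro ⟨⟨⟨hx, hy⟩, h1⟩, h2⟩
        exact ⟨⟨hx, by rw [← h1, ← h2]; abel⟩, hy, h2⟩
      · rintro ⟨⟨hx, h1⟩, hy, h2⟩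
        exact ⟨⟨⟨hx, hy⟩, by rw [h1, h2]; abel⟩, h2⟩
    · intro p hp
      simp only [Finset.coe_filter, Finset.mem_product, Set.mem_ofPred_eq] at hp
      simp only [Finset.coe_image, Set.mem_image, Finset.mem_coe]
      exact ⟨p.2, hp.1.2, rfl⟩
  have h0 : ((T ×ˢ T).filter (fun p => F p.1 = F p.2)).card = ∑ v ∈ T.image F, r v * r v := by
    have := key 0
    simpa [sub_eq_zero] using this
  have hs : ∑ v ∈ T.image F, r (v + h) * r (v + h) ≤ ∑ v ∈ T.image F, r v * r v := by
    calc ∑ v ∈ T.image F, r (v + h) * r (v + h) =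
        ∑ u ∈ (T.image F).image (fun v => v + h), r u * r u := by
          symm
          apply Finset.sum_image
          intro a _ b _ hab
          exact add_right_cancel hab
      _ ≤ ∑ u ∈ (T.image F).image (fun v => v + h) ∪ T.image F, r u * r u :=
          Finset.sum_le_sum_of_subset Finset.subset_union_left
      _ = ∑ v ∈ T.image F, r v * r v := by
          symm
          apply Finset.sum_subset Finset.subset_union_right
          intro u _ hu
          have : r u = 0 := by
            simp only [hr, Finset.card_eq_zero]
            rw [Finset.filter_eq_empty_iff]
            intro x hx hxu
            exact hu (Finset.mem_image.2 ⟨x, hx, hxu⟩)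
          simp [this]
  rw [key h, h0]
  have h2 : 2 * ∑ v ∈ T.image F, r (v + h) * r v ≤
      ∑ v ∈ T.image F, r (v + h) * r (v + h) + ∑ v ∈ T.image F, r v * r v := by
    rw [← Finset.sum_add_distrib, Finset.mul_sum]
    apply Finset.sum_le_sum
    intro v _
    nlinarith [two_mul_le_add_sq (r (v + h)) (r v)]
  omega

/-- Sum over a window of shifts. -/
lemma shift_window {α G : Type} [AddCommGroup G] [DecidableEq G] (T : Finset α) (F : α → G)
    (P : α × α → Prop) [DecidablePred P] (M : ℕ) (g : ℤ → G)
    (hP : ∀ p ∈ T ×ˢ T, P p → ∃ h ∈ Finset.Icc (-(M : ℤ)) M, F p.1 - F p.2 = g h) :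
    ((T ×ˢ T).filter P).card ≤
      (2 * M + 1) * ((T ×ˢ T).filter (fun p => F p.1 = F p.2)).card := by
  classical
  calc ((T ×ˢ T).filter P).card ≤ ((Finset.Icc (-(M : ℤ)) M).biUnion
        (fun h => (T ×ˢ T).filter (fun p => F p.1 - F p.2 = g h))).card := by
        apply Finset.card_le_card
        intro p hp
        rw [Finset.mem_filter] at hp
        obtain ⟨h, hh, hF⟩ := hP p hp.1 hp.2
        rw [Finset.mem_biUnion]
        exact ⟨h, hh, Finset.mem_filter.2 ⟨hp.1, hF⟩⟩
    _ ≤ ∑ h ∈ Finset.Icc (-(M : ℤ)) M, ((T ×ˢ T).filter (fun p => F p.1 - F p.2 = g h)).card :=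
        Finset.card_biUnion_le
    _ ≤ ∑ h ∈ Finset.Icc (-(M : ℤ)) M, ((T ×ˢ T).filter (fun p => F p.1 = F p.2)).card :=
        Finset.sum_le_sum fun h _ => shift_card_le T F (g h)
    _ = _ := by
        rw [Finset.sum_const, smul_eq_mul, Int.card_Icc]
        congr 1
        omega

lemma young_pow (j : ℕ) (x y : ℝ) (hx : 0 ≤ x) (hy : 0 ≤ y) :
    ((j : ℝ) + 2) * x ^ j * y ^ 2 ≤ 2 * y ^ (j + 2) + j * x ^ (j + 2) := by
  induction j with
  | zero => simp
  | succ j ih =>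
    have h1 := mul_le_mul_of_nonneg_left ih hx
    have h2 : 0 ≤ (y - x) * (2 * y ^ (j + 2) - x ^ (j + 2) - x ^ (j + 1) * y) := by
      rcases le_total x y with h | h
      · apply mul_nonneg (by linarith)
        have h3 : x ^ (j + 2) ≤ y ^ (j + 2) := by gcongr
        have h4 : x ^ (j + 1) * y ≤ y ^ (j + 1) * y := by gcongr
        have h5 : y ^ (j + 1) * y = y ^ (j + 2) := by ring
        linarith
      · apply mul_nonneg_of_nonpos_of_nonpos (by linarith)
        have h3 : y ^ (j + 2) ≤ x ^ (j + 2) := by gcongr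
        have h4 : y ^ (j + 1) * y ≤ x ^ (j + 1) * y := by gcongr
        have h5 : y ^ (j + 1) * y = y ^ (j + 2) := by ring
        linarith
    push_cast
    have e1 : x * (((j : ℝ) + 2) * x ^ j * y ^ 2) = ((j : ℝ) + 2) * x ^ (j + 1) * y ^ 2 := by ring
    have e2 : x * (2 * y ^ (j + 2) + j * x ^ (j + 2)) = 2 * x * y ^ (j + 2) + j * x ^ (j + 3) := by ring
    have e3 : (y - x) * (2 * y ^ (j + 2) - x ^ (j + 2) - x ^ (j + 1) * y) =
      2 * y ^ (j + 3) - 2 * x * y ^ (j + 2) + x ^ (j + 3) - x ^ (j + 1) * y ^ 2 := by ring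
    have e4 : y ^ (j + 1 + 2) = y ^ (j + 3) := rfl
    have e5 : x ^ (j + 1 + 2) = x ^ (j + 3) := rfl
    rw [e4, e5]
    linarith

/-- Tangent defect at `c`. -/
def defect (j : ℕ) (c t : ℝ) : ℝ :=
  t ^ (j + 2) - c ^ (j + 2) - ((j : ℝ) + 2) / 2 * c ^ j * (t ^ 2 - c ^ 2)

lemma defect_bounds (j : ℕ) (N c t : ℝ) (hN : 0 < N) (hc : N ≤ c) (hc2 : c ≤ 2 * N) (ht : N ≤ t)
    (ht2 : t ≤ 2 * N) : 0 ≤ defect j c t ∧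
      defect j c t ≤ ((j : ℝ) + 2) * j * 2 ^ j * N ^ j * (t - c) ^ 2 := by
  have h1 := young_pow j c t (by linarith) (by linarith)
  have h2 := young_pow j t c (by linarith) (by linarith)
  unfold defect
  constructor
  · have : c ^ (j + 2) = c ^ j * c ^ 2 := by ring
    rw [this] at h1 ⊢
    linarith
  · have h3 : t ^ (j + 2) - c ^ (j + 2) - ((j : ℝ) + 2) / 2 * c ^ j * (t ^ 2 - c ^ 2) ≤
        ((j : ℝ) + 2) / 2 * ((t ^ j - c ^ j) * (t ^ 2 - c ^ 2)) := by
      have e1 : t ^ (j + 2) = t ^ j * t ^ 2 := by ring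
      rw [e1] at h2 ⊢
      linarith
    have h4 : |t ^ j - c ^ j| ≤ |t - c| * j * (2 * N) ^ (j - 1) := by
      refine (abs_pow_sub_pow_le t c j).trans ?_
      gcongr
      rw [abs_of_nonneg (by linarith), abs_of_nonneg (by linarith)]
      exact max_le ht2 hc2
    have h5 : |t ^ 2 - c ^ 2| ≤ |t - c| * (4 * N) := by
      have : t ^ 2 - c ^ 2 = (t - c) * (t + c) := by ring
      rw [this, abs_mul]
      gcongr
      rw [abs_of_nonneg (by linarith)]; linarith
    refine h3.trans ?_
    calc ((j : ℝ) + 2) / 2 * ((t ^ j - c ^ j) * (t ^ 2 - c ^ 2)) ≤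
        ((j : ℝ) + 2) / 2 * ((|t - c| * j * (2 * N) ^ (j - 1)) * (|t - c| * (4 * N))) := by
          apply mul_le_mul_of_nonneg_left _ (by positivity)
          refine (le_abs_self _).trans ?_
          rw [abs_mul]
          exact mul_le_mul h4 h5 (abs_nonneg _) (by positivity)
      _ = ((j : ℝ) + 2) * ((j : ℝ) * (2 * N) ^ (j - 1) * (2 * N)) * |t - c| ^ 2 := by ring
      _ = _ := by
          rw [sq_abs]
          rcases j with _ | i
          · simp
          · simp only [Nat.add_sub_cancel]
            ring

lemma pow_gap (i : ℕ) (N c s : ℝ) (hN : 0 < N) (hc : N ≤ c) (hs : c ≤ s) :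
    N ^ i * (s - c) ≤ s ^ (i + 1) - c ^ (i + 1) := by
  have h1 : c ^ i ≤ s ^ i := by gcongr; linarith
  have h2 : N ^ i ≤ s ^ i := by gcongr; linarith
  have e1 : s ^ (i + 1) = s ^ i * s := by ring
  have e2 : c ^ (i + 1) = c ^ i * c := by ring
  rw [e1, e2]
  nlinarith [mul_le_mul_of_nonneg_right h1 (by linarith : (0 : ℝ) ≤ c),
    mul_le_mul_of_nonneg_right h2 (by linarith : (0 : ℝ) ≤ s - c)]

/-- lower bound for variation of the defect on one side, ordered version -/
lemma defect_gap_aux (i : ℕ) (N c s t D : ℝ) (hN : 0 < N) (hc : N ≤ c) (hs : N ≤ s) (hD : 0 < D)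
    (hst : s ≤ t) (hside : c + D ≤ s ∨ t + D ≤ c) :
    N ^ (i + 1) * D * (t - s) ≤ |defect (i + 1) c t - defect (i + 1) c s| := by
  have hsq : 2 * N * (t - s) ≤ t ^ 2 - s ^ 2 := by nlinarith
  have hts : 0 ≤ t - s := by linarith
  have hNi : 0 < N ^ i := by positivity
  have hfin : ∀ g : ℝ, N ^ i * D ≤ g → N ^ (i + 1) * D * (t - s) ≤
      (((i + 1 : ℕ) : ℝ) + 2) / 2 * (g * (t ^ 2 - s ^ 2)) := by
    intro g hg
    have hg0 : 0 ≤ g := le_trans (by positivity) hg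
    calc N ^ (i + 1) * D * (t - s) = 1 / 2 * ((N ^ i * D) * (2 * N * (t - s))) := by ring
      _ ≤ (((i + 1 : ℕ) : ℝ) + 2) / 2 * (g * (t ^ 2 - s ^ 2)) := by
        gcongr
        have : (0 : ℝ) ≤ ((i + 1 : ℕ) : ℝ) := by positivity
        linarith
  rcases hside with h | h
  · refine le_trans ?_ (le_abs_self _)
    have h1 := young_pow (i + 1) s t (by linarith) (by linarith)
    have h2 := pow_gap i N c s hN hc (by linarith)
    refine (hfin (s ^ (i + 1) - c ^ (i + 1)) (le_trans (by gcongr; linarith) h2)).trans ?_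
    unfold defect
    have e1 : s ^ (i + 1 + 2) = s ^ (i + 1) * s ^ 2 := by ring
    rw [e1] at h1 ⊢
    linarith
  · refine le_trans ?_ (neg_le_abs _)
    have h1 := young_pow (i + 1) t s (by linarith) (by linarith)
    have h2 := pow_gap i N t c hN (by linarith) (by linarith)
    refine (hfin (c ^ (i + 1) - t ^ (i + 1)) (le_trans (by gcongr; linarith) h2)).trans ?_
    unfold defect
    have e1 : t ^ (i + 1 + 2) = t ^ (i + 1) * t ^ 2 := by ring
    rw [e1] at h1 ⊢
    linarith

lemma defect_gap (i : ℕ) (N c s t D : ℝ) (hN : 0 < N) (hc : N ≤ c) (hs : N ≤ s) (ht : N ≤ t)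
    (hD : 0 < D) (hside : (c + D ≤ s ∧ c + D ≤ t) ∨ (s + D ≤ c ∧ t + D ≤ c)) :
    N ^ (i + 1) * D * |s - t| ≤ |defect (i + 1) c s - defect (i + 1) c t| := by
  rcases le_total s t with h | h
  · have := defect_gap_aux i N c s t D hN hc hs hD h (by tauto)
    rw [abs_sub_comm, abs_of_nonneg (by linarith), abs_sub_comm]
    exact this
  · have := defect_gap_aux i N c t s D hN hc ht hD h (by tauto)
    rw [abs_of_nonneg (by linarith)]
    exact this

lemma transversality (i : ℕ) (N l D n1 n2 n3 n4 n5 n6 : ℝ) (hN : 0 < N) (hD : 0 < D)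
    (hl : N ≤ l ^ 2)
    (h1 : N ≤ n1 ∧ n1 ≤ 2 * N) (h2 : N ≤ n2 ∧ n2 ≤ 2 * N) (h3 : N ≤ n3 ∧ n3 ≤ 2 * N)
    (h4 : N ≤ n4 ∧ n4 ≤ 2 * N) (h5 : N ≤ n5 ∧ n5 ≤ 2 * N) (h6 : N ≤ n6 ∧ n6 ≤ 2 * N)
    (d3 : |n3 - n2| ≤ l) (d5 : |n5 - n2| ≤ l) (d6 : |n6 - n2| ≤ l)
    (hside : (n2 + D ≤ n1 ∧ n2 + D ≤ n4) ∨ (n1 + D ≤ n2 ∧ n4 + D ≤ n2))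
    (hsq : n1 ^ 2 + n2 ^ 2 + n3 ^ 2 = n4 ^ 2 + n5 ^ 2 + n6 ^ 2)
    (hk : |n1 ^ (i + 3) + n2 ^ (i + 3) + n3 ^ (i + 3) -
      (n4 ^ (i + 3) + n5 ^ (i + 3) + n6 ^ (i + 3))| ≤ 3 * N ^ (i + 2)) :
    |n1 - n4| * D ≤ (3 + 3 * ((i : ℝ) + 3) * (i + 1) * 2 ^ (i + 1)) * l ^ 2 := by
  have g := defect_gap i N n2 n1 n4 D hN h2.1 h1.1 h4.1 hD hside
  set B : ℝ := ((i : ℝ) + 3) * (i + 1) * 2 ^ (i + 1) with hB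
  have hup : ∀ t, N ≤ t ∧ t ≤ 2 * N → |t - n2| ≤ l →
      0 ≤ defect (i + 1) n2 t ∧ defect (i + 1) n2 t ≤ B * N ^ (i + 1) * l ^ 2 := by
    intro t ht hd
    obtain ⟨ha, hb⟩ := defect_bounds (i + 1) N n2 t hN h2.1 h2.2 ht.1 ht.2
    refine ⟨ha, hb.trans ?_⟩
    have : (t - n2) ^ 2 ≤ l ^ 2 := by
      rw [← sq_abs]; gcongr
    rw [hB]
    push_cast
    have e : ((i : ℝ) + 1 + 2) = i + 3 := by ring
    rw [e]
    gcongr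
  obtain ⟨a3, b3⟩ := hup n3 h3 d3
  obtain ⟨a5, b5⟩ := hup n5 h5 d5
  obtain ⟨a6, b6⟩ := hup n6 h6 d6
  have hid : defect (i + 1) n2 n1 - defect (i + 1) n2 n4 =
      (n1 ^ (i + 3) + n2 ^ (i + 3) + n3 ^ (i + 3) - (n4 ^ (i + 3) + n5 ^ (i + 3) + n6 ^ (i + 3)))
      - defect (i + 1) n2 n3 + defect (i + 1) n2 n5 + defect (i + 1) n2 n6 := by
    unfold defect
    have e : ∀ t : ℝ, t ^ (i + 1 + 2) = t ^ (i + 3) := fun _ => rfl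
    simp only [e]
    linear_combination (-((((i + 1 : ℕ) : ℝ) + 2) / 2 * n2 ^ (i + 1))) * hsq
  have hNl : N ^ (i + 2) ≤ N ^ (i + 1) * l ^ 2 := by
    rw [pow_succ]; gcongr
  have habs : |defect (i + 1) n2 n1 - defect (i + 1) n2 n4| ≤
      3 * (N ^ (i + 1) * l ^ 2) + 3 * (B * N ^ (i + 1) * l ^ 2) := by
    rw [hid]
    rw [abs_le] at hk ⊢
    constructor <;> linarith [hk.1, hk.2]
  have hfin : N ^ (i + 1) * (|n1 - n4| * D) ≤ N ^ (i + 1) * ((3 + 3 * B) * l ^ 2) := by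
    calc _ = N ^ (i + 1) * D * |n1 - n4| := by ring
      _ ≤ _ := g.trans habs
      _ = _ := by ring
  have := le_of_mul_le_mul_left hfin (by positivity)
  refine this.trans (le_of_eq ?_)
  rw [hB]; ring

/-- The cube of a finite set. -/
def cube (A : Finset ℤ) : Finset (ℤ × ℤ × ℤ) := A ×ˢ A ×ˢ A

lemma mem_cube (A : Finset ℤ) (x : ℤ × ℤ × ℤ) :
    x ∈ cube A ↔ x.1 ∈ A ∧ x.2.1 ∈ A ∧ x.2.2 ∈ A := by
  simp [cube, Finset.mem_product]

lemma card_cube (A : Finset ℤ) : (cube A).card = A.card ^ 3 := by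
  simp [cube, Finset.card_product]; ring

/-- sum of coordinates -/
def s1 (x : ℤ × ℤ × ℤ) : ℤ := x.1 + x.2.1 + x.2.2
/-- sum of squares -/
def s2 (x : ℤ × ℤ × ℤ) : ℤ := x.1 ^ 2 + x.2.1 ^ 2 + x.2.2 ^ 2

lemma key_identity (x y : ℤ × ℤ × ℤ) (h1 : s1 x = s1 y) (h2 : s2 x = s2 y) :
    (x.1 - y.1) * (x.2.1 - y.1) = (y.2.1 - x.2.2) * (y.2.2 - x.2.2) := by
  unfold s1 s2 at *
  have e : x.2.2 = y.1 + y.2.1 + y.2.2 - x.1 - x.2.1 := by linarith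
  have h3 : 2 * ((x.1 - y.1) * (x.2.1 - y.1) - (y.2.1 - x.2.2) * (y.2.2 - x.2.2)) = 0 := by
    rw [e] at h2 ⊢
    linear_combination (-1) * h2
  linarith

lemma J3_bound (A : Finset ℤ) (Dm : ℕ)
    (hD : ∀ a ∈ A, ∀ b ∈ A, ∀ c ∈ A, (a - c) * (b - c) ≠ 0 →
      (((a - c) * (b - c)).natAbs.divisors).card ≤ Dm) :
    ((cube A ×ˢ cube A).filter (fun p => (s1 p.1, s2 p.1) = (s1 p.2, s2 p.2))).card ≤
      (4 + 2 * Dm) * A.card ^ 3 := by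
  classical
  set U := (cube A ×ˢ cube A).filter (fun p => (s1 p.1, s2 p.1) = (s1 p.2, s2 p.2)) with hU
  have memU : ∀ p ∈ U, p.1 ∈ cube A ∧ p.2 ∈ cube A ∧ s1 p.1 = s1 p.2 ∧ s2 p.1 = s2 p.2 := by
    intro p hp
    simp only [hU, Finset.mem_filter, Finset.mem_product, Prod.mk.injEq] at hp
    tauto
  rw [← Finset.card_filter_add_card_filter_not (s := U)
    (fun p => (p.1.1 - p.2.1) * (p.1.2.1 - p.2.1) = 0), ← card_cube, add_mul]
  apply add_le_add
  · apply Finset.card_le_mul_card_image_of_maps_to (f := fun p => p.1)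
    · intro p hp
      exact (memU p (Finset.mem_filter.1 hp).1).1
    · intro x _
      calc _ ≤ (({(x, (x.1, x.2.2, x.2.1)), (x, (x.1, x.2.1, x.2.2)), (x, (x.2.1, x.2.2, x.1)),
          (x, (x.2.1, x.1, x.2.2))} : Finset ((ℤ × ℤ × ℤ) × ℤ × ℤ × ℤ))).card := by
            apply Finset.card_le_card
            intro p hp
            simp only [Finset.mem_filter] at hp
            obtain ⟨⟨hpU, hP⟩, hx⟩ := hp
            obtain ⟨_, _, h1, h2⟩ := memU p hpU
            have hk := key_identity _ _ h1 h2
            rw [hP] at hk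
            obtain ⟨⟨a, b, c⟩, u, v, w⟩ := p
            subst hx
            simp only [s1] at h1 hP hk
            simp only [Finset.mem_insert, Finset.mem_singleton, Prod.mk.injEq, true_and]
            rcases mul_eq_zero.1 hP with h | h <;> rcases mul_eq_zero.1 hk.symm with h' | h'
            · left; refine ⟨?_, ?_, ?_⟩ <;> linarith
            · right; left; refine ⟨?_, ?_, ?_⟩ <;> linarith
            · right; right; left; refine ⟨?_, ?_, ?_⟩ <;> linarith
            · right; right; right; refine ⟨?_, ?_, ?_⟩ <;> linarith
        _ ≤ 4 := Finset.card_le_four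
  · apply Finset.card_le_mul_card_image_of_maps_to (f := fun p => (p.1.1, p.1.2.1, p.2.1))
    · intro p hp
      obtain ⟨h1, h2, _⟩ := memU p (Finset.mem_filter.1 hp).1
      rw [mem_cube] at *
      exact ⟨h1.1, h1.2.1, h2.1⟩
    · intro z hz
      obtain ⟨a, b, c⟩ := z
      rw [mem_cube] at hz
      by_cases hP0 : (a - c) * (b - c) = 0
      · rw [Finset.card_eq_zero.2]
        · exact Nat.zero_le _
        · rw [Finset.filter_eq_empty_iff]
          intro p hp hpz
          simp only [Finset.mem_filter] at hp
          simp only [Prod.mk.injEq] at hpz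
          rw [hpz.1, hpz.2.1, hpz.2.2] at hp
          exact hp.2 hP0
      set Q := (((a - c) * (b - c)).natAbs.divisors) with hQ
      have hQc : Q.card ≤ Dm := hD a hz.1 b hz.2.1 c hz.2.2 hP0
      calc _ ≤ (Q.image (fun n : ℕ => (n : ℤ)) ∪ Q.image (fun n : ℕ => -(n : ℤ))).card := by
            apply Finset.card_le_card_of_injOn (fun p => p.2.2.1 - p.1.2.2)
            · intro p hp
              simp only [Finset.coe_filter, Finset.mem_filter, Set.mem_ofPred_eq, Prod.mk.injEq] at hp
              obtain ⟨⟨hpU, hP⟩, e1, e2, e3⟩ := hp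
              obtain ⟨_, _, h1, h2⟩ := memU p hpU
              have hk := key_identity _ _ h1 h2
              rw [e1, e2, e3] at hk
              have hdvd : (p.2.2.1 - p.1.2.2).natAbs ∈ Q := by
                rw [hQ, Nat.mem_divisors]
                refine ⟨Int.natAbs_dvd_natAbs.2 ⟨_, hk⟩, by simpa using hP0⟩
              simp only [Finset.coe_union, Finset.coe_image, Set.mem_union, Set.mem_image,
                Finset.mem_coe]
              rcases Int.natAbs_eq (p.2.2.1 - p.1.2.2) with h | h
              · left; exact ⟨_, hdvd, h.symm⟩
              · right; exact ⟨_, hdvd, h.symm⟩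
            · intro p hp q hq hpq
              simp only [Finset.coe_filter, Finset.mem_filter, Set.mem_ofPred_eq, Prod.mk.injEq] at hp hq
              obtain ⟨⟨hpU, hP⟩, e1, e2, e3⟩ := hp
              obtain ⟨_, _, h1, h2⟩ := memU p hpU
              have hk := key_identity _ _ h1 h2
              obtain ⟨⟨hqU, hP'⟩, e1', e2', e3'⟩ := hq
              obtain ⟨_, _, h1', h2'⟩ := memU q hqU
              have hk' := key_identity _ _ h1' h2'
              rw [e1, e2, e3] at hk
              rw [e1', e2', e3'] at hk'
              obtain ⟨⟨x1, x2, x3⟩, y1, y2, y3⟩ := p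
              obtain ⟨⟨x1', x2', x3'⟩, y1', y2', y3'⟩ := q
              simp only [s1] at *
              subst e1 e2 e3 e1' e2' e3'
              rw [← hpq] at hk'
              have hne : y2 - x3 ≠ 0 := by
                intro h0
                rw [h0, zero_mul] at hk
                exact hP0 hk
              have hg : y3 - x3 = y3' - x3' := mul_left_cancel₀ hne (hk.symm.trans hk')
              have : x3 = x3' := by linarith
              simp only [Prod.mk.injEq, true_and]
              refine ⟨this, ?_, ?_⟩ <;> linarith
        _ ≤ Q.card + Q.card := (Finset.card_union_le _ _).trans
              (add_le_add Finset.card_image_le Finset.card_image_le)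
        _ ≤ 2 * Dm := by omega

/-- Characters on `(ZMod p)²`. -/
def chr (p : ℕ) [NeZero p] (v : ℤ × ℤ) (x : ZMod p × ZMod p) : ℂ :=
  (ZMod.stdAddChar (x.1 * (v.1 : ZMod p)) : ℂ) * (ZMod.stdAddChar (x.2 * (v.2 : ZMod p)) : ℂ)

lemma chr_add (p : ℕ) [NeZero p] (v w : ℤ × ℤ) (x : ZMod p × ZMod p) :
    chr p (v + w) x = chr p v x * chr p w x := by
  unfold chr
  simp only [Prod.fst_add, Prod.snd_add, Int.cast_add, mul_add, AddChar.map_add_eq_mul]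
  ring

lemma chr_conj (p : ℕ) [NeZero p] (v : ℤ × ℤ) (x : ZMod p × ZMod p) :
    (starRingEnd ℂ) (chr p v x) = chr p (-v) x := by
  unfold chr
  simp only [map_mul, Prod.fst_neg, Prod.snd_neg, Int.cast_neg, mul_neg, AddChar.map_neg_eq_conj]

lemma chr_sum (p : ℕ) [NeZero p] (v : ℤ × ℤ) (h1 : |v.1| < p) (h2 : |v.2| < p) :
    ∑ x, chr p v x = if v = 0 then ((p : ℂ) ^ 2) else 0 := by
  classical
  unfold chr
  rw [Fintype.sum_prod_type]
  simp only [← Finset.mul_sum, ← Finset.sum_mul]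
  rw [AddChar.sum_mulShift _ (ZMod.isPrimitive_stdAddChar p),
    AddChar.sum_mulShift _ (ZMod.isPrimitive_stdAddChar p)]
  have hz : ∀ a : ℤ, |a| < p → ((a : ZMod p) = 0 ↔ a = 0) := by
    intro a ha
    rw [ZMod.intCast_zmod_eq_zero_iff_dvd]
    exact ⟨fun h => Int.eq_zero_of_abs_lt_dvd h ha, fun h => h ▸ dvd_zero _⟩
  rw [ZMod.card]
  simp only [hz _ h1, hz _ h2]
  obtain ⟨a, b⟩ := v
  by_cases ha : a = 0 <;> by_cases hb : b = 0 <;> simp [ha, hb, sq]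

/-- Vector sum over a triple. -/
def gsum (v : ℤ → ℤ × ℤ) (t : ℤ × ℤ × ℤ) : ℤ × ℤ := v t.1 + v t.2.1 + v t.2.2

lemma small_six {B : ℤ} {p : ℕ} (hp : 6 * B < p) {a b c d e f : ℤ} (ha : |a| ≤ B) (hb : |b| ≤ B)
    (hc : |c| ≤ B) (hd : |d| ≤ B) (he : |e| ≤ B) (hf : |f| ≤ B) :
    |a + b + c - (d + e + f)| < p := by
  rw [abs_le] at *
  rw [abs_lt]
  constructor <;> linarith [ha.1, hb.1, hc.1, hd.1, he.1, hf.1, ha.2, hb.2, hc.2, hd.2, he.2, hf.2]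

lemma gsum_sum (p : ℕ) [NeZero p] (v : ℤ → ℤ × ℤ) (S : Finset ℤ) (B : ℤ) (hp : 6 * B < p)
    (hB : ∀ n ∈ S, |(v n).1| ≤ B ∧ |(v n).2| ≤ B) (t u : ℤ × ℤ × ℤ) (ht : t ∈ cube S)
    (hu : u ∈ cube S) :
    ∑ x, chr p (gsum v t - gsum v u) x = if gsum v t = gsum v u then ((p : ℂ) ^ 2) else 0 := by
  rw [mem_cube] at ht hu
  rw [chr_sum]
  · simp only [sub_eq_zero]
  · exact small_six hp (hB _ ht.1).1 (hB _ ht.2.1).1 (hB _ ht.2.2).1 (hB _ hu.1).1 (hB _ hu.2.1).1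
      (hB _ hu.2.2).1
  · exact small_six hp (hB _ ht.1).2 (hB _ ht.2.1).2 (hB _ ht.2.2).2 (hB _ hu.1).2 (hB _ hu.2.1).2
      (hB _ hu.2.2).2

/-- The integers of `S` in the arc `[a, a + l)`. -/
def arcSet (S : Finset ℤ) (a l : ℝ) : Finset ℤ :=
  S.filter (fun n : ℤ => a ≤ (n : ℝ) ∧ (n : ℝ) < a + l)

lemma sixV_eq (p : ℕ) [NeZero p] (v : ℤ → ℤ × ℤ) (S : Finset ℤ) (B : ℤ) (hp : 6 * B < p)
    (hB : ∀ n ∈ S, |(v n).1| ≤ B ∧ |(v n).2| ≤ B) (a l : ℝ) :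
    sixV (fun n x => chr p (v n) x) S a l = (p : ℝ) ^ 2 *
      (((cube (arcSet S a l) ×ˢ cube (arcSet S a l)).filter
        (fun q => gsum v q.1 = gsum v q.2)).card : ℝ) := by
  classical
  set A := arcSet S a l with hA
  have hAS : A ⊆ S := Finset.filter_subset _ _
  have hcube : ∀ t ∈ cube A, t ∈ cube S := by
    intro t ht
    rw [mem_cube] at *
    exact ⟨hAS ht.1, hAS ht.2.1, hAS ht.2.2⟩
  have h3 : ∀ x, (arcSum (fun n x => chr p (v n) x) S a l x) ^ 3 =
      ∑ t ∈ cube A, chr p (gsum v t) x := by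
    intro x
    have : arcSum (fun n x => chr p (v n) x) S a l x = ∑ n ∈ A, chr p (v n) x := rfl
    rw [this, cube, Finset.sum_product]
    simp only [Finset.sum_product, gsum, chr_add]
    rw [pow_succ, sq, Finset.sum_mul_sum, Finset.sum_mul]
    apply Finset.sum_congr rfl
    intro i _
    rw [Finset.sum_mul_sum]
  have hC : ((sixV (fun n x => chr p (v n) x) S a l : ℝ) : ℂ) = (((p : ℝ) ^ 2 *
      (((cube A ×ˢ cube A).filter (fun q => gsum v q.1 = gsum v q.2)).card : ℝ) : ℝ) : ℂ) := by
    unfold sixV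
    push_cast
    have h6 : ∀ x, ((‖arcSum (fun n x => chr p (v n) x) S a l x‖ : ℂ)) ^ 6 =
        ∑ q ∈ cube A ×ˢ cube A, chr p (gsum v q.1 - gsum v q.2) x := by
      intro x
      have e1 : ((‖arcSum (fun n x => chr p (v n) x) S a l x‖ : ℂ)) ^ 6 =
        (arcSum (fun n x => chr p (v n) x) S a l x) ^ 3 *
        (starRingEnd ℂ) ((arcSum (fun n x => chr p (v n) x) S a l x) ^ 3) := by
        rw [Complex.mul_conj']
        push_cast [norm_pow]
        ring
      rw [e1, h3, map_sum, Finset.sum_mul_sum, Finset.sum_product]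
      simp only [chr_conj, ← chr_add, sub_eq_add_neg]
    simp only [h6]
    rw [Finset.sum_comm, Finset.card_filter]
    push_cast
    rw [Finset.mul_sum]
    apply Finset.sum_congr rfl
    intro q hq
    rw [Finset.mem_product] at hq
    rw [gsum_sum p v S B hp hB _ _ (hcube _ hq.1) (hcube _ hq.2)]
    split_ifs <;> simp
  exact_mod_cast hC

lemma floor_six (P : ℤ) (hP : 0 < P) (a b c d e f : ℤ) :
    |(a + b + c - (d + e + f)) - P * ((a / P + b / P + c / P) - (d / P + e / P + f / P))| ≤
      3 * P := by
  have h : ∀ z : ℤ, 0 ≤ z - P * (z / P) ∧ z - P * (z / P) ≤ P := by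
    intro z
    have h1 := Int.emod_add_mul_ediv z P
    have h2 := Int.emod_nonneg z hP.ne'
    have h3 := Int.emod_lt_of_pos z hP
    constructor <;> linarith
  have ha := h a
  have hb := h b
  have hc := h c
  have hd := h d
  have he := h e
  have hf := h f
  have e1 : (a + b + c - (d + e + f)) - P * ((a / P + b / P + c / P) - (d / P + e / P + f / P)) =
    (a - P * (a / P)) + (b - P * (b / P)) + (c - P * (c / P)) -
      ((d - P * (d / P)) + (e - P * (e / P)) + (f - P * (f / P))) := by ring
  rw [e1, abs_le]
  constructor <;> linarith [ha.1, hb.1, hc.1, hd.1, he.1, hf.1, ha.2, hb.2, hc.2, hd.2, he.2, hf.2]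

/-- frequency vector -/
def vec (i N : ℕ) (n : ℤ) : ℤ × ℤ := (n ^ 2, n ^ (i + 3) / (N : ℤ) ^ (i + 2))

/-- constant of transversality -/
def cz (i : ℕ) : ℕ := 3 + 3 * (i + 3) * (i + 1) * 2 ^ (i + 1)

lemma transv_vec (i N : ℕ) (hN : 1 ≤ N) (p : ℕ) [NeZero p] (B : ℤ) (hp : 6 * B < p)
    (hB : ∀ n ∈ Finset.Icc (N : ℤ) (2 * N), |(vec i N n).1| ≤ B ∧ |(vec i N n).2| ≤ B) :
    Transv (fun n x => chr p (vec i N n) x) (Finset.Icc (N : ℤ) (2 * N)) (Real.sqrt N) (cz i) := by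
  intro a l D hl hD n1 m1 n2 m2 n3 m3 n4 m4 n5 m5 n6 m6 a2 a3 a5 a6 hside hlt
  have e1 : ∀ x, chr p (vec i N n1) x * ((starRingEnd ℂ) (chr p (vec i N n4) x) *
      (chr p (vec i N n2) x * (chr p (vec i N n3) x *
      ((starRingEnd ℂ) (chr p (vec i N n5) x) * (starRingEnd ℂ) (chr p (vec i N n6) x))))) =
      chr p (gsum (vec i N) (n1, n2, n3) - gsum (vec i N) (n4, n5, n6)) x := by
    intro x
    simp only [chr_conj, ← chr_add]
    congr 1
    simp only [gsum]
    abel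
  simp only [e1]
  rw [gsum_sum p (vec i N) _ B hp hB _ _ ((mem_cube _ _).2 ⟨m1, m2, m3⟩)
    ((mem_cube _ _).2 ⟨m4, m5, m6⟩)]
  rw [if_neg]
  intro hg
  simp only [gsum, vec, Prod.mk_add_mk, Prod.mk.injEq] at hg
  obtain ⟨hsq, hb⟩ := hg
  have hNR : (0 : ℝ) < N := by exact_mod_cast hN
  have hNZ : (0 : ℤ) < N := by exact_mod_cast hN
  have hPZ : (0 : ℤ) < (N : ℤ) ^ (i + 2) := by positivity
  have hfl := floor_six _ hPZ (n1 ^ (i + 3)) (n2 ^ (i + 3)) (n3 ^ (i + 3)) (n4 ^ (i + 3))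
    (n5 ^ (i + 3)) (n6 ^ (i + 3))
  rw [hb, sub_self, mul_zero, sub_zero] at hfl
  have hflR : |(n1 : ℝ) ^ (i + 3) + (n2 : ℝ) ^ (i + 3) + (n3 : ℝ) ^ (i + 3) -
      ((n4 : ℝ) ^ (i + 3) + (n5 : ℝ) ^ (i + 3) + (n6 : ℝ) ^ (i + 3))| ≤ 3 * (N : ℝ) ^ (i + 2) := by
    exact_mod_cast hfl
  have hsqR : (n1 : ℝ) ^ 2 + (n2 : ℝ) ^ 2 + (n3 : ℝ) ^ 2 =
      (n4 : ℝ) ^ 2 + (n5 : ℝ) ^ 2 + (n6 : ℝ) ^ 2 := by exact_mod_cast hsq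
  have hmem : ∀ n ∈ Finset.Icc (N : ℤ) (2 * N), (N : ℝ) ≤ n ∧ (n : ℝ) ≤ 2 * N := by
    intro n hn
    rw [Finset.mem_Icc] at hn
    exact ⟨by exact_mod_cast hn.1, by exact_mod_cast hn.2⟩
  have hl2 : (N : ℝ) ≤ l ^ 2 := by
    rw [← Real.sq_sqrt hNR.le]
    have := Real.sqrt_nonneg (N : ℝ)
    gcongr
  have hd : ∀ n : ℤ, (a ≤ (n : ℝ) ∧ (n : ℝ) < a + l) → |(n : ℝ) - n2| ≤ l := by
    intro n hn
    rw [abs_le]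
    constructor <;> linarith [hn.1, hn.2, a2.1, a2.2]
  have := transversality i N l D n1 n2 n3 n4 n5 n6 hNR hD hl2 (hmem _ m1) (hmem _ m2) (hmem _ m3)
    (hmem _ m4) (hmem _ m5) (hmem _ m6) (hd _ a3) (hd _ a5) (hd _ a6)
    (by rcases hside with h | h
        · left; constructor <;> linarith [h.1, h.2, a2.2]
        · right; constructor <;> linarith [h.1, h.2, a2.1]) hsqR hflR
  unfold cz at hlt
  push_cast at hlt
  linarith

lemma card_arcSet (S : Finset ℤ) (a l : ℝ) (hl : 1 ≤ l) : ((arcSet S a l).card : ℝ) ≤ 2 * l := by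
  have h1 : (arcSet S a l).card ≤ (Finset.Ico ⌈a⌉ ⌈a + l⌉).card := by
    apply Finset.card_le_card
    intro n hn
    simp only [arcSet, Finset.mem_filter] at hn
    rw [Finset.mem_Ico]
    exact ⟨Int.ceil_le.2 hn.2.1, Int.lt_ceil.2 hn.2.2⟩
  rw [Int.card_Ico] at h1
  have h2 : ⌈a⌉ ≤ ⌈a + l⌉ := Int.ceil_le_ceil (by linarith)
  have h3 : ((⌈a + l⌉ - ⌈a⌉).toNat : ℝ) = (⌈a + l⌉ : ℝ) - ⌈a⌉ := by
    have : ((⌈a + l⌉ - ⌈a⌉).toNat : ℤ) = ⌈a + l⌉ - ⌈a⌉ := Int.toNat_of_nonneg (by linarith)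
    exact_mod_cast this
  have h4 : ((arcSet S a l).card : ℝ) ≤ ((⌈a + l⌉ - ⌈a⌉).toNat : ℝ) := by exact_mod_cast h1
  rw [h3] at h4
  linarith [Int.ceil_lt_add_one (a + l), Int.le_ceil a]

lemma sum_window (N l T c x2 x3 y1 y2 y3 : ℝ) (hN : 0 < N) (hc : N ≤ c) (hl : l ^ 2 ≤ T ^ 2 * N)
    (h2 : |x2 - c| ≤ l) (h3 : |x3 - c| ≤ l) (h4 : |y1 - c| ≤ l) (h5 : |y2 - c| ≤ l)
    (h6 : |y3 - c| ≤ l) (hsq : c ^ 2 + x2 ^ 2 + x3 ^ 2 = y1 ^ 2 + y2 ^ 2 + y3 ^ 2) :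
    |c + x2 + x3 - (y1 + y2 + y3)| ≤ 3 * T ^ 2 := by
  have hs : ∀ t : ℝ, |t| ≤ l → t ^ 2 ≤ l ^ 2 := by
    intro t ht
    rw [← sq_abs t]; gcongr
  have g2 := hs _ h2
  have g3 := hs _ h3
  have g4 := hs _ h4
  have g5 := hs _ h5
  have g6 := hs _ h6
  have hid : 2 * c * (c + x2 + x3 - (y1 + y2 + y3)) =
      (y1 - c) ^ 2 + (y2 - c) ^ 2 + (y3 - c) ^ 2 - (x2 - c) ^ 2 - (x3 - c) ^ 2 := by
    linear_combination hsq
  have hb : |2 * c * (c + x2 + x3 - (y1 + y2 + y3))| ≤ 3 * l ^ 2 := by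
    rw [hid, abs_le]
    constructor <;> linarith [sq_nonneg (y1 - c), sq_nonneg (y2 - c), sq_nonneg (y3 - c),
      sq_nonneg (x2 - c), sq_nonneg (x3 - c), sq_nonneg l]
  rw [abs_mul, abs_of_pos (by linarith : (0 : ℝ) < 2 * c)] at hb
  have h7 : N * |c + x2 + x3 - (y1 + y2 + y3)| ≤ N * (3 * T ^ 2) := by
    have h8 : N * |c + x2 + x3 - (y1 + y2 + y3)| ≤ 2 * c * |c + x2 + x3 - (y1 + y2 + y3)| := by
      gcongr; linarith
    linarith
  exact le_of_mul_le_mul_left h7 hN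

lemma base_count (i N : ℕ) (hN : 1 ≤ N) (T l a : ℝ) (hl1 : 1 ≤ l) (hl : l ^ 2 ≤ T ^ 2 * N)
    (ε Cd : ℝ) (hε : 0 < ε) (hCd : 1 ≤ Cd)
    (hdiv : ∀ n : ℕ, n ≠ 0 → (n.divisors.card : ℝ) ≤ Cd * (n : ℝ) ^ ε) :
    (((cube (arcSet (Finset.Icc (N : ℤ) (2 * N)) a l) ×ˢ
      cube (arcSet (Finset.Icc (N : ℤ) (2 * N)) a l)).filter
        (fun q => gsum (vec i N) q.1 = gsum (vec i N) q.2)).card : ℝ) ≤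
      (2 * (⌈3 * T ^ 2⌉₊ : ℝ) + 1) * (48 * Cd) * (N : ℝ) ^ (2 * ε) * l ^ 3 := by
  classical
  set A := arcSet (Finset.Icc (N : ℤ) (2 * N)) a l with hA
  have hNR : (1 : ℝ) ≤ N := by exact_mod_cast hN
  have memA : ∀ n ∈ A, (N : ℤ) ≤ n ∧ n ≤ 2 * N ∧ a ≤ (n : ℝ) ∧ (n : ℝ) < a + l := by
    intro n hn
    simp only [hA, arcSet, Finset.mem_filter, Finset.mem_Icc] at hn
    tauto
  have w := shift_window (cube A) (fun x => (s1 x, s2 x))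
    (fun q => gsum (vec i N) q.1 = gsum (vec i N) q.2) ⌈3 * T ^ 2⌉₊ (fun h => (h, 0)) (by
      rintro ⟨⟨x1, x2, x3⟩, y1, y2, y3⟩ hq hg
      simp only [Finset.mem_product, mem_cube] at hq
      obtain ⟨⟨m1, m2, m3⟩, m4, m5, m6⟩ := hq
      simp only [gsum, vec, Prod.mk_add_mk, Prod.mk.injEq] at hg
      refine ⟨s1 (x1, x2, x3) - s1 (y1, y2, y3), ?_, ?_⟩
      · have hd : ∀ n ∈ A, |(n : ℝ) - x1| ≤ l := by
          intro n hn
          have b1 := memA _ hn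
          have b2 := memA _ m1
          rw [abs_le]
          constructor <;> linarith [b1.2.2.1, b1.2.2.2, b2.2.2.1, b2.2.2.2]
        have := sum_window N l T x1 x2 x3 y1 y2 y3 (by linarith)
          (by exact_mod_cast (memA _ m1).1) hl (hd _ m2) (hd _ m3) (hd _ m4) (hd _ m5) (hd _ m6)
          (by exact_mod_cast hg.1)
        have h2 := this.trans (Nat.le_ceil _)
        have h3 : |x1 + x2 + x3 - (y1 + y2 + y3)| ≤ (⌈3 * T ^ 2⌉₊ : ℤ) := by exact_mod_cast h2
        rw [Finset.mem_Icc]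
        exact abs_le.1 h3
      · simp only [s1, s2, Prod.mk_sub_mk, Prod.mk.injEq, true_and]
        linarith [hg.1])
  have j := J3_bound A ⌊Cd * (N : ℝ) ^ (2 * ε)⌋₊ (by
    intro x hx y hy z hz hne
    apply Nat.le_floor
    have h0 : ((x - z) * (y - z)).natAbs ≠ 0 := by simpa using hne
    refine (hdiv _ h0).trans ?_
    have h1 : ((((x - z) * (y - z)).natAbs : ℕ) : ℝ) ≤ (N : ℝ) ^ 2 := by
      have hx' := memA x hx
      have hy' := memA y hy
      have hz' := memA z hz
      have k1 : |x - z| ≤ N := by rw [abs_le]; constructor <;> linarith [hx'.1, hx'.2.1, hz'.1, hz'.2.1]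
      have k2 : |y - z| ≤ N := by rw [abs_le]; constructor <;> linarith [hy'.1, hy'.2.1, hz'.1, hz'.2.1]
      have k3 : |(x - z) * (y - z)| ≤ (N : ℤ) * N := by
        rw [abs_mul]; exact mul_le_mul k1 k2 (abs_nonneg _) (by positivity)
      have k4 : ((((x - z) * (y - z)).natAbs : ℕ) : ℤ) ≤ (N : ℤ) ^ 2 := by
        rw [Int.natCast_natAbs, sq]; exact k3
      exact_mod_cast k4
    calc Cd * ((((x - z) * (y - z)).natAbs : ℕ) : ℝ) ^ ε ≤ Cd * ((N : ℝ) ^ 2) ^ ε := by gcongr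
      _ = Cd * (N : ℝ) ^ (2 * ε) := by
        rw [← Real.rpow_natCast, ← Real.rpow_mul (by positivity)]; norm_num)
  have hX : 1 ≤ Cd * (N : ℝ) ^ (2 * ε) := by
    have : 1 ≤ (N : ℝ) ^ (2 * ε) := Real.one_le_rpow hNR (by positivity)
    nlinarith
  have hfl := Nat.floor_le (show 0 ≤ Cd * (N : ℝ) ^ (2 * ε) by linarith)
  have hcard := card_arcSet (Finset.Icc (N : ℤ) (2 * N)) a l hl1
  rw [← hA] at hcard
  have wj := w.trans (Nat.mul_le_mul_left _ j)
  calc (((cube A ×ˢ cube A).filter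
        (fun q => gsum (vec i N) q.1 = gsum (vec i N) q.2)).card : ℝ) ≤
      (2 * (⌈3 * T ^ 2⌉₊ : ℝ) + 1) *
        ((4 + 2 * (⌊Cd * (N : ℝ) ^ (2 * ε)⌋₊ : ℝ)) * (A.card : ℝ) ^ 3) := by exact_mod_cast wj
    _ ≤ (2 * (⌈3 * T ^ 2⌉₊ : ℝ) + 1) * ((6 * (Cd * (N : ℝ) ^ (2 * ε))) * (2 * l) ^ 3) := by
      gcongr
      linarith
    _ = _ := by ring

lemma exact_count (i : ℕ) (ε : ℝ) (hε : 0 < ε) : ∃ K : ℝ, 0 < K ∧ ∀ N : ℕ, 1 ≤ N →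
    (((cube (Finset.Icc (N : ℤ) (2 * N)) ×ˢ cube (Finset.Icc (N : ℤ) (2 * N))).filter
        (fun q => gsum (vec i N) q.1 = gsum (vec i N) q.2)).card : ℝ) ≤
      K * (N : ℝ) ^ (3 + ε) := by
  obtain ⟨T, hT, hcore⟩ := core_bound (cz i) (by unfold cz; omega) (ε / 2) (by positivity)
  obtain ⟨Cd, hCd, hdiv⟩ := divisor_bound (ε / 4) (by positivity)
  set K0 : ℝ := (2 * (⌈3 * T ^ 2⌉₊ : ℝ) + 1) * (48 * Cd) with hK0
  have hK0p : 0 < K0 := by positivity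
  refine ⟨K0 * (2 ^ (ε / 2) * 2 ^ 3), by positivity, ?_⟩
  intro N hN
  have hNR : (1 : ℝ) ≤ N := by exact_mod_cast hN
  set S := Finset.Icc (N : ℤ) (2 * N) with hS
  obtain ⟨B, hB⟩ : ∃ B : ℤ, ∀ n ∈ S, |(vec i N n).1| ≤ B ∧ |(vec i N n).2| ≤ B := by
    refine ⟨∑ n ∈ S, (|(vec i N n).1| + |(vec i N n).2|), fun n hn => ?_⟩
    have := Finset.single_le_sum (f := fun n => |(vec i N n).1| + |(vec i N n).2|)
      (fun m _ => by positivity) hn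
    have h1 := abs_nonneg (vec i N n).1
    have h2 := abs_nonneg (vec i N n).2
    constructor <;> linarith
  obtain ⟨p, hp0, hp⟩ : ∃ p : ℕ, p ≠ 0 ∧ 6 * B < p :=
    ⟨(6 * B).natAbs + 1, by omega, by push_cast; have := Int.le_natAbs (a := 6 * B); push_cast at this; linarith⟩
  have : NeZero p := ⟨hp0⟩
  have hpR : (0 : ℝ) < (p : ℝ) ^ 2 := by positivity
  have hR1 : (1 : ℝ) ≤ Real.sqrt N := Real.one_le_sqrt.2 hNR
  have h := hcore (ZMod p × ZMod p) (fun n x => chr p (vec i N n) x) S (Real.sqrt N) (by linarith)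
    (transv_vec i N hN p B hp hB) ((p : ℝ) ^ 2 * (K0 * (N : ℝ) ^ (2 * (ε / 4)))) (by positivity) (by
      intro a l h1 h2
      rw [sixV_eq p (vec i N) S B hp hB a l]
      have hl1 : 1 ≤ l := hR1.trans h1
      have hl2 : l ^ 2 ≤ T ^ 2 * N := by
        calc l ^ 2 ≤ (T * Real.sqrt N) ^ 2 := by gcongr
          _ = T ^ 2 * N := by rw [mul_pow, Real.sq_sqrt (by linarith)]
      have hb := base_count i N hN T l a hl1 hl2 (ε / 4) Cd (by positivity) hCd hdiv
      have hlη : 1 ≤ l ^ (ε / 2) := Real.one_le_rpow hl1 (by positivity)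
      rw [mul_assoc, mul_assoc]
      apply mul_le_mul_of_nonneg_left _ hpR.le
      refine hb.trans ?_
      rw [← hK0]
      have : 0 ≤ K0 * (N : ℝ) ^ (2 * (ε / 4)) := by positivity
      apply mul_le_mul_of_nonneg_left _ this
      exact le_mul_of_one_le_left (by positivity) hlη)
  have h2 := h N (N + 1) (by
    rw [Real.sqrt_le_left (by linarith)]
    nlinarith)
  rw [sixV_eq p (vec i N) S B hp hB] at h2
  have hA : arcSet S N (N + 1) = S := by
    unfold arcSet
    rw [Finset.filter_eq_self]
    intro n hn
    rw [hS, Finset.mem_Icc] at hn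
    refine ⟨by exact_mod_cast hn.1, ?_⟩
    have : (n : ℝ) ≤ 2 * N := by exact_mod_cast hn.2
    linarith
  rw [hA, mul_assoc, mul_assoc] at h2
  have h3 := le_of_mul_le_mul_left h2 hpR
  refine h3.trans ?_
  calc K0 * (N : ℝ) ^ (2 * (ε / 4)) * (((N : ℝ) + 1) ^ (ε / 2) * ((N : ℝ) + 1) ^ 3) ≤
      K0 * (N : ℝ) ^ (2 * (ε / 4)) * ((2 * (N : ℝ)) ^ (ε / 2) * (2 * (N : ℝ)) ^ 3) := by
        have : (N : ℝ) + 1 ≤ 2 * N := by linarith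
        gcongr
    _ = K0 * (2 ^ (ε / 2) * 2 ^ 3) * ((N : ℝ) ^ (2 * (ε / 4)) * (N : ℝ) ^ (ε / 2) * (N : ℝ) ^ 3) := by
        rw [Real.mul_rpow (by norm_num) (by linarith)]; ring
    _ = K0 * (2 ^ (ε / 2) * 2 ^ 3) * (N : ℝ) ^ (3 + ε) := by
        congr 1
        rw [← Real.rpow_natCast, ← Real.rpow_add (by linarith), ← Real.rpow_add (by linarith)]
        congr 1
        push_cast
        ring

theorem diophantine_count_squares_kth_powers (k : ℕ) (hk : 4 ≤ k) (C : ℝ) (hC : 0 < C) :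
    ∀ ε > (0 : ℝ), ∃ Cε > (0 : ℝ), ∀ N : ℕ, 1 ≤ N →
      (Nat.card {t : Fin 6 → ℤ //
          (∀ i, (N : ℤ) ≤ t i ∧ t i ≤ 2 * N) ∧
          t 0 ^ 2 + t 1 ^ 2 + t 2 ^ 2 = t 3 ^ 2 + t 4 ^ 2 + t 5 ^ 2 ∧
          ((|t 0 ^ k + t 1 ^ k + t 2 ^ k - t 3 ^ k - t 4 ^ k - t 5 ^ k| : ℤ) : ℝ) ≤
            C * (N : ℝ) ^ (k - 1)} : ℝ) ≤
        Cε * (N : ℝ) ^ ((3 : ℝ) + ε) := by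
  intro ε hε
  classical
  obtain ⟨i, rfl⟩ : ∃ i, k = i + 3 := ⟨k - 3, by omega⟩
  obtain ⟨K, hK, hcount⟩ := exact_count i ε hε
  set M : ℕ := ⌈C + 3⌉₊ with hM
  refine ⟨(2 * M + 1) * K, by positivity, ?_⟩
  intro N hN
  have hNZ : (0 : ℤ) < N := by exact_mod_cast hN
  have hPZ : (0 : ℤ) < (N : ℤ) ^ (i + 2) := by positivity
  have hNR : (0 : ℝ) < N := by exact_mod_cast hN
  have hPR : (0 : ℝ) < (N : ℝ) ^ (i + 2) := by positivity
  set S := Finset.Icc (N : ℤ) (2 * N) with hS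
  have w := shift_window (cube S) (gsum (vec i N))
    (fun q => ∃ h ∈ Finset.Icc (-(M : ℤ)) M, gsum (vec i N) q.1 - gsum (vec i N) q.2 = (0, h)) M
    (fun h => (0, h)) (fun q _ h => h)
  set W := (cube S ×ˢ cube S).filter (fun q => ∃ h ∈ Finset.Icc (-(M : ℤ)) M,
    gsum (vec i N) q.1 - gsum (vec i N) q.2 = (0, h)) with hW
  have hle : Nat.card {t : Fin 6 → ℤ //
          (∀ i, (N : ℤ) ≤ t i ∧ t i ≤ 2 * N) ∧
          t 0 ^ 2 + t 1 ^ 2 + t 2 ^ 2 = t 3 ^ 2 + t 4 ^ 2 + t 5 ^ 2 ∧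
          ((|t 0 ^ (i + 3) + t 1 ^ (i + 3) + t 2 ^ (i + 3) - t 3 ^ (i + 3) - t 4 ^ (i + 3)
            - t 5 ^ (i + 3)| : ℤ) : ℝ) ≤ C * (N : ℝ) ^ (i + 3 - 1)} ≤ W.card := by
    have hmem : ∀ t : {t : Fin 6 → ℤ //
          (∀ i, (N : ℤ) ≤ t i ∧ t i ≤ 2 * N) ∧
          t 0 ^ 2 + t 1 ^ 2 + t 2 ^ 2 = t 3 ^ 2 + t 4 ^ 2 + t 5 ^ 2 ∧
          ((|t 0 ^ (i + 3) + t 1 ^ (i + 3) + t 2 ^ (i + 3) - t 3 ^ (i + 3) - t 4 ^ (i + 3)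
            - t 5 ^ (i + 3)| : ℤ) : ℝ) ≤ C * (N : ℝ) ^ (i + 3 - 1)},
        (((t.1 0, t.1 1, t.1 2), (t.1 3, t.1 4, t.1 5)) : (ℤ × ℤ × ℤ) × (ℤ × ℤ × ℤ)) ∈ W := by
      rintro ⟨t, hr, hsq, hk'⟩
      have hm : ∀ j, t j ∈ S := fun j => Finset.mem_Icc.2 (hr j)
      simp only [hW, Finset.mem_filter, Finset.mem_product, mem_cube]
      refine ⟨⟨⟨hm _, hm _, hm _⟩, hm _, hm _, hm _⟩, ?_⟩
      refine ⟨(gsum (vec i N) (t 0, t 1, t 2) - gsum (vec i N) (t 3, t 4, t 5)).2, ?_, ?_⟩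
      · set z : ℤ := (gsum (vec i N) (t 0, t 1, t 2) - gsum (vec i N) (t 3, t 4, t 5)).2 with hz
        have hfl := floor_six _ hPZ (t 0 ^ (i + 3)) (t 1 ^ (i + 3)) (t 2 ^ (i + 3)) (t 3 ^ (i + 3))
          (t 4 ^ (i + 3)) (t 5 ^ (i + 3))
        have hz2 : z = (t 0 ^ (i + 3) / (N : ℤ) ^ (i + 2) + t 1 ^ (i + 3) / (N : ℤ) ^ (i + 2) +
          t 2 ^ (i + 3) / (N : ℤ) ^ (i + 2)) - (t 3 ^ (i + 3) / (N : ℤ) ^ (i + 2) +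
          t 4 ^ (i + 3) / (N : ℤ) ^ (i + 2) + t 5 ^ (i + 3) / (N : ℤ) ^ (i + 2)) := rfl
        rw [← hz2] at hfl
        have e1 : t 0 ^ (i + 3) + t 1 ^ (i + 3) + t 2 ^ (i + 3) - t 3 ^ (i + 3) - t 4 ^ (i + 3)
            - t 5 ^ (i + 3) = t 0 ^ (i + 3) + t 1 ^ (i + 3) + t 2 ^ (i + 3) -
            (t 3 ^ (i + 3) + t 4 ^ (i + 3) + t 5 ^ (i + 3)) := by ring
        rw [e1] at hk'
        set Y : ℤ := t 0 ^ (i + 3) + t 1 ^ (i + 3) + t 2 ^ (i + 3) -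
            (t 3 ^ (i + 3) + t 4 ^ (i + 3) + t 5 ^ (i + 3)) with hY
        have hflR : |(Y : ℝ) - (N : ℝ) ^ (i + 2) * (z : ℝ)| ≤ 3 * (N : ℝ) ^ (i + 2) := by
          exact_mod_cast hfl
        have e2 : i + 3 - 1 = i + 2 := rfl
        rw [e2, Int.cast_abs] at hk'
        have hzR : (N : ℝ) ^ (i + 2) * |(z : ℝ)| ≤ (N : ℝ) ^ (i + 2) * (C + 3) := by
          rw [← abs_of_pos hPR, ← abs_mul, abs_of_pos hPR]
          rw [abs_le] at *
          constructor <;> linarith [hflR.1, hflR.2, hk'.1, hk'.2]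
        have hz3 := (le_of_mul_le_mul_left hzR hPR).trans (Nat.le_ceil _)
        rw [← hM] at hz3
        have hz4 : |z| ≤ (M : ℤ) := by exact_mod_cast hz3
        rw [Finset.mem_Icc]
        exact abs_le.1 hz4
      · ext
        · simp only [gsum, vec, Prod.mk_add_mk, Prod.mk_sub_mk]
          linarith
        · rfl
    have hcard := Nat.card_le_card_of_injective (fun t => (⟨_, hmem t⟩ : {q // q ∈ W})) (by
      rintro ⟨t, ht⟩ ⟨u, hu⟩ htu
      simp only [Subtype.mk.injEq, Prod.mk.injEq] at htu ⊢
      obtain ⟨⟨h0, h1, h2⟩, h3, h4, h5⟩ := htu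
      funext j
      fin_cases j <;> assumption)
    rwa [Nat.card_eq_fintype_card (α := {q // q ∈ W}), Fintype.card_coe] at hcard
  have h1 := hcount N hN
  calc _ ≤ (W.card : ℝ) := by exact_mod_cast hle
    _ ≤ (2 * M + 1) * (((cube S ×ˢ cube S).filter
        (fun q => gsum (vec i N) q.1 = gsum (vec i N) q.2)).card : ℝ) := by exact_mod_cast w
    _ ≤ (2 * M + 1) * (K * (N : ℝ) ^ (3 + ε)) := by gcongr
    _ = _ := by ring

end
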